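/- Let φ₁, φ₂ be GF²-sentences and Σ a signature. Then φ₁ ⊨_Σ φ₂ if and only if for every regular forest model 𝔄 of φ₁ of finite outdegree there is a forest model 𝔅 of φ₂ such that: (1) for every a ∈ A there is b ∈ B with (𝔄,a) ∼_Σ (𝔅,b); and (2) for every b ∈ B and every k ≥ 0 there is a ∈ A with (𝔄,a) ∼^k_Σ (𝔅,b). (Forest-model variant of the bounded-bisimulation characterization of GF²(Σ)-entailment.) -/

import Mathlib

/-! Core: relational two-variable first-order logic with equality (unary and
binary predicates only), the guarded fragment GF², structures, satisfaction,
atomic types, (bounded/delimited) guarded bisimulations, forest structures. -/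

namespace GFC

inductive Var : Type
  | x
  | y
deriving DecidableEq

/-- Formulas of two-variable relational FO with equality (variables `x`, `y`). -/
inductive Fml (U B : Type) : Type
  | uatom : U → Var → Fml U B
  | batom : B → Var → Var → Fml U B
  | eqv   : Var → Var → Fml U B
  | fls   : Fml U B
  | neg   : Fml U B → Fml U B
  | conj  : Fml U B → Fml U B → Fml U B
  | disj  : Fml U B → Fml U B → Fml U B
  | impl  : Fml U B → Fml U B → Fml U B
  | all   : Var → Fml U B → Fml U B
  | ex    : Var → Fml U B → Fml U B

namespace Fml

variable {U B : Type}

def free : Fml U B → Set Var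
  | uatom _ v => {v}
  | batom _ v w => {v, w}
  | eqv v w => {v, w}
  | fls => ∅
  | neg φ => φ.free
  | conj φ ψ => φ.free ∪ ψ.free
  | disj φ ψ => φ.free ∪ ψ.free
  | impl φ ψ => φ.free ∪ ψ.free
  | all v φ => φ.free \ {v}
  | ex v φ => φ.free \ {v}

def IsSentence (φ : Fml U B) : Prop := φ.free = ∅

def upreds : Fml U B → Set U
  | uatom P _ => {P}
  | batom _ _ _ => ∅
  | eqv _ _ => ∅
  | fls => ∅
  | neg φ => φ.upreds
  | conj φ ψ => φ.upreds ∪ ψ.upreds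
  | disj φ ψ => φ.upreds ∪ ψ.upreds
  | impl φ ψ => φ.upreds ∪ ψ.upreds
  | all _ φ => φ.upreds
  | ex _ φ => φ.upreds

def bpreds : Fml U B → Set B
  | uatom _ _ => ∅
  | batom R _ _ => {R}
  | eqv _ _ => ∅
  | fls => ∅
  | neg φ => φ.bpreds
  | conj φ ψ => φ.bpreds ∪ ψ.bpreds
  | disj φ ψ => φ.bpreds ∪ ψ.bpreds
  | impl φ ψ => φ.bpreds ∪ ψ.bpreds
  | all _ φ => φ.bpreds
  | ex _ φ => φ.bpreds

def IsAtom : Fml U B → Prop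
  | uatom _ _ => True
  | batom _ _ _ => True
  | eqv _ _ => True
  | _ => False

def IsEqAtom : Fml U B → Prop
  | eqv _ _ => True
  | _ => False

/-- guarded quantifier depth (in GF² formulas every quantifier is guarded) -/
def gdepth : Fml U B → ℕ
  | uatom _ _ => 0
  | batom _ _ _ => 0
  | eqv _ _ => 0
  | fls => 0
  | neg φ => φ.gdepth
  | conj φ ψ => max φ.gdepth ψ.gdepth
  | disj φ ψ => max φ.gdepth ψ.gdepth
  | impl φ ψ => max φ.gdepth ψ.gdepth
  | all _ φ => φ.gdepth + 1
  | ex _ φ => φ.gdepth + 1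

/-- subformulas (including the formula itself) -/
def Subf : Fml U B → Set (Fml U B)
  | uatom P v => {uatom P v}
  | batom R v w => {batom R v w}
  | eqv v w => {eqv v w}
  | fls => {fls}
  | neg φ => insert (neg φ) φ.Subf
  | conj φ ψ => insert (conj φ ψ) (φ.Subf ∪ ψ.Subf)
  | disj φ ψ => insert (disj φ ψ) (φ.Subf ∪ ψ.Subf)
  | impl φ ψ => insert (impl φ ψ) (φ.Subf ∪ ψ.Subf)
  | all v φ => insert (all v φ) φ.Subf
  | ex v φ => insert (ex v φ) φ.Subf

/-- rename the free variables along `f` (bound variables untouched) -/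
def renameFree : (Var → Var) → Fml U B → Fml U B
  | f, uatom P v => uatom P (f v)
  | f, batom R v w => batom R (f v) (f w)
  | f, eqv v w => eqv (f v) (f w)
  | _, fls => fls
  | f, neg φ => neg (renameFree f φ)
  | f, conj φ ψ => conj (renameFree f φ) (renameFree f ψ)
  | f, disj φ ψ => disj (renameFree f φ) (renameFree f ψ)
  | f, impl φ ψ => impl (renameFree f φ) (renameFree f ψ)
  | f, all v φ => all v (renameFree (Function.update f v v) φ)
  | f, ex v φ => ex v (renameFree (Function.update f v v) φ)

end Fml

/-- The two-variable guarded fragment GF²: quantification only in the guarded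
patterns `∀v (α → φ)` and `∃v (α ∧ φ)` with `α` an atom containing all free
variables of `φ` as well as the quantified variable `v`. -/
inductive IsGF2 {U B : Type} : Fml U B → Prop
  | uatom (P : U) (v : Var) : IsGF2 (.uatom P v)
  | batom (R : B) (v w : Var) : IsGF2 (.batom R v w)
  | eqv (v w : Var) : IsGF2 (.eqv v w)
  | fls : IsGF2 .fls
  | neg {φ} : IsGF2 φ → IsGF2 (.neg φ)
  | conj {φ ψ} : IsGF2 φ → IsGF2 ψ → IsGF2 (.conj φ ψ)
  | disj {φ ψ} : IsGF2 φ → IsGF2 ψ → IsGF2 (.disj φ ψ)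
  | impl {φ ψ} : IsGF2 φ → IsGF2 ψ → IsGF2 (.impl φ ψ)
  | allG {v : Var} {α φ : Fml U B} :
      α.IsAtom → IsGF2 φ → φ.free ∪ {v} ⊆ α.free → IsGF2 (.all v (.impl α φ))
  | exG {v : Var} {α φ : Fml U B} :
      α.IsAtom → IsGF2 φ → φ.free ∪ {v} ⊆ α.free → IsGF2 (.ex v (.conj α φ))

/-- openGF²: GF² formulas with exactly one free variable, in which equality is
never used as a guard and which contain no subformula that is a sentence. -/
def IsOpenGF2 {U B : Type} (φ : Fml U B) : Prop :=
  IsGF2 φ ∧ (∃ v, φ.free = {v}) ∧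
  (∀ ψ ∈ φ.Subf, ¬ ψ.IsSentence) ∧
  (∀ ψ ∈ φ.Subf, ∀ (v : Var) (α χ : Fml U B),
      (ψ = .all v (.impl α χ) ∨ ψ = .ex v (.conj α χ)) → ¬ α.IsEqAtom)

/-- relational structures interpreting unary predicates `U` and binary
predicates `B` -/
structure Str (U B : Type) where
  Dom : Type
  nonempty : Nonempty Dom
  u : U → Dom → Prop
  b : B → Dom → Dom → Prop

def upd {D : Type} (σ : Var → D) (v : Var) (d : D) : Var → D :=
  fun w => if w = v then d else σ w

def Sat {U B : Type} (A : Str U B) : Fml U B → (Var → A.Dom) → Prop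
  | .uatom P v, σ => A.u P (σ v)
  | .batom R v w, σ => A.b R (σ v) (σ w)
  | .eqv v w, σ => σ v = σ w
  | .fls, _ => False
  | .neg φ, σ => ¬ Sat A φ σ
  | .conj φ ψ, σ => Sat A φ σ ∧ Sat A ψ σ
  | .disj φ ψ, σ => Sat A φ σ ∨ Sat A ψ σ
  | .impl φ ψ, σ => Sat A φ σ → Sat A ψ σ
  | .all v φ, σ => ∀ d : A.Dom, Sat A φ (upd σ v d)
  | .ex v φ, σ => ∃ d : A.Dom, Sat A φ (upd σ v d)

/-- truth of a sentence in a structure -/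
def SatS {U B : Type} (A : Str U B) (φ : Fml U B) : Prop := ∀ σ, Sat A φ σ

def Entails {U B : Type} (φ ψ : Fml U B) : Prop :=
  ∀ A : Str U B, SatS A φ → SatS A ψ

def Satisfiable {U B : Type} (φ : Fml U B) : Prop := ∃ A : Str U B, SatS A φ

/-- a GF²(Σ)-sentence, for the signature Σ = (SU, SB) -/
def IsGF2Sentence {U B : Type} (SU : Set U) (SB : Set B) (ψ : Fml U B) : Prop :=
  IsGF2 ψ ∧ ψ.IsSentence ∧ ψ.upreds ⊆ SU ∧ ψ.bpreds ⊆ SB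

/-- `φ₁ ⊨_Σ φ₂` : GF²(Σ)-entailment -/
def GF2Entails {U B : Type} (SU : Set U) (SB : Set B) (φ₁ φ₂ : Fml U B) : Prop :=
  ∀ ψ : Fml U B, IsGF2Sentence SU SB ψ → Entails φ₂ ψ → Entails φ₁ ψ

/-- atomic formulas in the variables x, y -/
inductive Atom2 (U B : Type) : Type
  | ua : U → Var → Atom2 U B
  | ba : B → Var → Var → Atom2 U B

def vval {D : Type} (a a' : D) : Var → D
  | .x => a
  | .y => a'

def Atom2.inSig {U B : Type} (SU : Set U) (SB : Set B) : Atom2 U B → Prop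
  | .ua P _ => P ∈ SU
  | .ba R _ _ => R ∈ SB

def Atom2.holds {U B : Type} (A : Str U B) (a a' : A.Dom) : Atom2 U B → Prop
  | .ua P v => A.u P (vval a a' v)
  | .ba R v w => A.b R (vval a a' v) (vval a a' w)

def Atom2.onlyX {U B : Type} : Atom2 U B → Prop
  | .ua _ v => v = Var.x
  | .ba _ v w => v = Var.x ∧ w = Var.x

/-- the atomic 1-type of `a` for the signature `(SU, SB)` (the set of
Σ-atoms in the single variable x satisfied by `a`; this determines the set of
negated atoms as well) -/
def atp1 {U B : Type} (A : Str U B) (SU : Set U) (SB : Set B) (a : A.Dom) :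
    Set (Atom2 U B) :=
  {α | α.onlyX ∧ α.inSig SU SB ∧ α.holds A a a}

/-- the atomic 2-type of `(a, a')` for the signature `(SU, SB)` (the set of
Σ-atoms in x, y satisfied by `(a, a')`; together with `a ≠ a'` this determines
the atomic 2-type) -/
def atp2 {U B : Type} (A : Str U B) (SU : Set U) (SB : Set B) (a a' : A.Dom) :
    Set (Atom2 U B) :=
  {α | α.inSig SU SB ∧ α.holds A a a'}

/-- the atomic 2-type of `(a, a')` is guarded (contains `R x y` or `R y x`
for some binary `R ∈ SB`) -/
def Guarded2 {U B : Type} (A : Str U B) (SB : Set B) (a a' : A.Dom) : Prop :=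
  ∃ R ∈ SB, A.b R a a' ∨ A.b R a' a

/-- GF²(Σ)-bisimulation between structures `A` and `Bm` -/
structure IsBisim {U B : Type} (A Bm : Str U B) (SU : Set U) (SB : Set B)
    (Z : A.Dom → Bm.Dom → Prop) : Prop where
  atom_eq : ∀ {a b}, Z a b → atp1 A SU SB a = atp1 Bm SU SB b
  forth : ∀ {a b}, Z a b → ∀ a', a' ≠ a → Guarded2 A SB a a' →
      ∃ b', b' ≠ b ∧ atp2 A SU SB a a' = atp2 Bm SU SB b b' ∧ Z a' b'
  back : ∀ {a b}, Z a b → ∀ b', b' ≠ b → Guarded2 Bm SB b b' →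
      ∃ a', a' ≠ a ∧ atp2 A SU SB a a' = atp2 Bm SU SB b b' ∧ Z a' b'

/-- `(A, a) ∼_Σ (Bm, b)` -/
def Bisim {U B : Type} (A Bm : Str U B) (SU : Set U) (SB : Set B)
    (a : A.Dom) (b : Bm.Dom) : Prop :=
  ∃ Z, IsBisim A Bm SU SB Z ∧ Z a b

/-- `(A, a) ∼ᵏ_Σ (Bm, b)` : k-GF²(Σ)-bisimilarity -/
def KBisim {U B : Type} (A Bm : Str U B) (SU : Set U) (SB : Set B) :
    ℕ → A.Dom → Bm.Dom → Prop
  | 0, a, b => atp1 A SU SB a = atp1 Bm SU SB b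
  | k+1, a, b => atp1 A SU SB a = atp1 Bm SU SB b ∧
      (∀ a', a' ≠ a → Guarded2 A SB a a' →
        ∃ b', b' ≠ b ∧ atp2 A SU SB a a' = atp2 Bm SU SB b b' ∧
          KBisim A Bm SU SB k a' b') ∧
      (∀ b', b' ≠ b → Guarded2 Bm SB b b' →
        ∃ a', a' ≠ a ∧ atp2 A SU SB a a' = atp2 Bm SU SB b b' ∧
          KBisim A Bm SU SB k a' b')

/-- a (full-signature) atomic 2-type, given as its set of positive atoms,
is guarded -/
def Guarded2Type {U B : Type} (τ : Set (Atom2 U B)) : Prop :=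
  ∃ R : B, Atom2.ba R Var.x Var.y ∈ τ ∨ Atom2.ba R Var.y Var.x ∈ τ

/-- successor-saturated structures -/
def SuccSaturated {U B : Type} (A : Str U B) : Prop :=
  ∀ (a : A.Dom) (τ : Set (Atom2 U B)) (Γ : Set (Fml U B)),
    Guarded2Type τ →
    (∀ ψ ∈ Γ, IsOpenGF2 ψ ∧ ψ.free = {Var.x}) →
    (∀ Γ' : Finset (Fml U B), ↑Γ' ⊆ Γ →
      ∃ a', a' ≠ a ∧ atp2 A Set.univ Set.univ a a' = τ ∧
        ∀ ψ ∈ Γ', Sat A ψ (fun _ => a')) →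
    ∃ b', b' ≠ a ∧ atp2 A Set.univ Set.univ a b' = τ ∧
      ∀ ψ ∈ Γ, Sat A ψ (fun _ => b')

/-- finite outdegree: every element stands in a guarded atomic 2-type (for the
full signature) to only finitely many elements -/
def FiniteOutdeg {U B : Type} (A : Str U B) : Prop :=
  ∀ a : A.Dom, {a' | a' ≠ a ∧ ∃ R : B, A.b R a a' ∨ A.b R a' a}.Finite

/-- Σ-adjacency (edges of the Gaifman graph of the Σ-reduct) -/
def SigAdj {U B : Type} (A : Str U B) (SB : Set B) (a a' : A.Dom) : Prop :=
  a ≠ a' ∧ ∃ R ∈ SB, A.b R a a' ∨ A.b R a' a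

/-- A forest structure: a structure whose Gaifman graph is a forest, directed
by choosing a root for each tree; `parent p c` says that `p` is the
predecessor (parent) of `c`. -/
structure Forest (U B : Type) extends Str U B where
  parent : Dom → Dom → Prop
  parent_unique : ∀ {c p p' : Dom}, parent p c → parent p' c → p = p'
  parent_wf : WellFounded parent
  adj_iff : ∀ a a' : Dom,
    (a ≠ a' ∧ ∃ R : B, b R a a' ∨ b R a' a) ↔ (parent a a' ∨ parent a' a)

namespace Forest

variable {U B : Type}

/-- `a` together with its descendants -/
def desc (F : Forest U B) (a : F.Dom) : Set F.Dom :=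
  {c | Relation.ReflTransGen F.parent a c}

/-- the subtrees rooted at `a` and at `a'` are isomorphic -/
def SubtreeIso (F : Forest U B) (a a' : F.Dom) : Prop :=
  ∃ f : (F.desc a) ≃ (F.desc a'),
    (f ⟨a, Relation.ReflTransGen.refl⟩).val = a' ∧
    (∀ c d : F.desc a, F.parent c.val d.val ↔ F.parent (f c).val (f d).val) ∧
    (∀ (P : U) (c : F.desc a), F.u P c.val ↔ F.u P (f c).val) ∧
    (∀ (R : B) (c d : F.desc a), F.b R c.val d.val ↔ F.b R (f c).val (f d).val)

/-- regular: only finitely many subtrees up to isomorphism -/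
def Regular (F : Forest U B) : Prop :=
  ∃ S : Set F.Dom, S.Finite ∧ ∀ a, ∃ a' ∈ S, F.SubtreeIso a' a

/-- `a ≺ a'` : `a` and `a'` lie in the same Σ-tree and `a` is a proper
ancestor of `a'` -/
def prec (F : Forest U B) (SB : Set B) (a a' : F.Dom) : Prop :=
  Relation.ReflTransGen (SigAdj F.toStr SB) a a' ∧ Relation.TransGen F.parent a a'

end Forest

/-- `a_⊥`-delimited GF²(Σ)-bisimulation: like a GF²(Σ)-bisimulation except that
the back-and-forth conditions are not required at pairs whose first component
is `abot` -/
structure IsPtDelimBisim {U B : Type} (A Bm : Str U B) (SU : Set U) (SB : Set B)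
    (abot : A.Dom) (Z : A.Dom → Bm.Dom → Prop) : Prop where
  atom_eq : ∀ {a b}, Z a b → atp1 A SU SB a = atp1 Bm SU SB b
  forth : ∀ {a b}, Z a b → a ≠ abot → ∀ a', a' ≠ a → Guarded2 A SB a a' →
      ∃ b', b' ≠ b ∧ atp2 A SU SB a a' = atp2 Bm SU SB b b' ∧ Z a' b'
  back : ∀ {a b}, Z a b → a ≠ abot → ∀ b', b' ≠ b → Guarded2 Bm SB b b' →
      ∃ a', a' ≠ a ∧ atp2 A SU SB a a' = atp2 Bm SU SB b b' ∧ Z a' b'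

/-- `(A, a) ∼^{a_⊥}_Σ (Bm, b)` -/
def PtDelimBisim {U B : Type} (A Bm : Str U B) (SU : Set U) (SB : Set B)
    (abot : A.Dom) (a : A.Dom) (b : Bm.Dom) : Prop :=
  ∃ Z, IsPtDelimBisim A Bm SU SB abot Z ∧ Z a b

/-- `A_⊥`-delimited GF²(Σ)-bisimulation between a forest structure `F` and a
structure `Bm`, given by a pair of relations `Z0 (∼⁰)` and `Z1 (∼¹)`. -/
structure IsDelimBisim {U B : Type} (F : Forest U B) (Bm : Str U B)
    (SU : Set U) (SB : Set B) (Abot : Set F.Dom)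
    (Z0 Z1 : F.Dom → Bm.Dom → Prop) : Prop where
  zero : ∀ {a b}, Z0 a b →
    atp1 F.toStr SU SB a = atp1 Bm SU SB b ∧
    (∀ a', a' ≠ a → Guarded2 F.toStr SB a a' →
      ∃ b', b' ≠ b ∧
        ((F.parent a' a ∧ a' ∈ Abot) → Z1 a' b') ∧
        (¬ (F.parent a' a ∧ a' ∈ Abot) → Z0 a' b')) ∧
    (∀ b', b' ≠ b → Guarded2 Bm SB b b' →
      ∃ a', a' ≠ a ∧
        ((F.parent a' a ∧ a' ∈ Abot) → Z1 a' b') ∧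
        (¬ (F.parent a' a ∧ a' ∈ Abot) → Z0 a' b'))
  one : ∀ {a b}, Z1 a b → (∀ p, F.parent p a → p ∉ Abot) →
    atp1 F.toStr SU SB a = atp1 Bm SU SB b ∧
    (∀ a', a' ≠ a → Guarded2 F.toStr SB a a' →
      ∃ b', b' ≠ b ∧
        ((F.parent a a' ∧ a ∈ Abot) → Z0 a' b') ∧
        (¬ (F.parent a a' ∧ a ∈ Abot) → Z1 a' b')) ∧
    (∀ b', b' ≠ b → Guarded2 Bm SB b b' →
      ∃ a', a' ≠ a ∧
        ((F.parent a a' ∧ a ∈ Abot) → Z0 a' b') ∧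
        (¬ (F.parent a a' ∧ a ∈ Abot) → Z1 a' b'))

/-- `(F, a) ∼^{A_⊥}_Σ (Bm, b)` -/
def DelimBisim {U B : Type} (F : Forest U B) (Bm : Str U B)
    (SU : Set U) (SB : Set B) (Abot : Set F.Dom) (a : F.Dom) (b : Bm.Dom) : Prop :=
  ∃ Z0 Z1, IsDelimBisim F Bm SU SB Abot Z0 Z1 ∧ Z0 a b

/-- `cl φ` : the subformulas of `φ` closed under single negation and renaming
of free variables (among x, y) -/
def clSet {U B : Type} (φ : Fml U B) : Set (Fml U B) :=
  {χ | ∃ ψ ∈ φ.Subf, ∃ f : Var → Var,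
      χ = ψ.renameFree f ∨ χ = .neg (ψ.renameFree f)}

/-- a 1-type for `φ₂`: a set of formulas `ψ(x)` from `cl φ₂` such that
`φ₂ ∧ ∃x ⋀ t(x)` is satisfiable -/
def OneType {U B : Type} (φ₂ : Fml U B) (t : Set (Fml U B)) : Prop :=
  t ⊆ clSet φ₂ ∧ (∀ ψ ∈ t, ψ.free ⊆ {Var.x}) ∧
  ∃ (A : Str U B) (a : A.Dom), SatS A φ₂ ∧ ∀ ψ ∈ t, Sat A ψ (fun _ => a)

/-- `tp_Bm(b)` : the 1-type of `b` in `Bm` (w.r.t. `φ₂`) -/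
def tpOf {U B : Type} (Bm : Str U B) (φ₂ : Fml U B) (b : Bm.Dom) :
    Set (Fml U B) :=
  {ψ | ψ ∈ clSet φ₂ ∧ ψ.free ⊆ {Var.x} ∧ Sat Bm ψ (fun _ => b)}

end GFC
namespace GFC

section Helpers

variable {U B : Type}

theorem sat_congr (A : Str U B) (φ : Fml U B) : ∀ (σ ρ : Var → A.Dom),
    (∀ v ∈ φ.free, σ v = ρ v) → (Sat A φ σ ↔ Sat A φ ρ) := by
  induction φ with
  | uatom P v => intro σ ρ h; simp [Sat, h v (by simp [Fml.free])]
  | batom R v w =>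
    intro σ ρ h; simp [Sat, h v (by simp [Fml.free]), h w (by simp [Fml.free])]
  | eqv v w =>
    intro σ ρ h; simp [Sat, h v (by simp [Fml.free]), h w (by simp [Fml.free])]
  | fls => intro σ ρ h; simp [Sat]
  | neg φ ih => intro σ ρ h; simp only [Sat]; rw [ih σ ρ h]
  | conj φ ψ ih1 ih2 =>
    intro σ ρ h; simp only [Sat]
    rw [ih1 σ ρ (fun v hv => h v (Or.inl hv)), ih2 σ ρ (fun v hv => h v (Or.inr hv))]
  | disj φ ψ ih1 ih2 =>
    intro σ ρ h; simp only [Sat]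
    rw [ih1 σ ρ (fun v hv => h v (Or.inl hv)), ih2 σ ρ (fun v hv => h v (Or.inr hv))]
  | impl φ ψ ih1 ih2 =>
    intro σ ρ h; simp only [Sat]
    rw [ih1 σ ρ (fun v hv => h v (Or.inl hv)), ih2 σ ρ (fun v hv => h v (Or.inr hv))]
  | all v φ ih =>
    intro σ ρ h; simp only [Sat]
    refine forall_congr' fun d => ih _ _ fun w hw => ?_
    by_cases hwv : w = v
    · simp [upd, hwv]
    · simp [upd, hwv, h w ⟨hw, hwv⟩]
  | ex v φ ih =>
    intro σ ρ h; simp only [Sat]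
    refine exists_congr fun d => ih _ _ fun w hw => ?_
    by_cases hwv : w = v
    · simp [upd, hwv]
    · simp [upd, hwv, h w ⟨hw, hwv⟩]

theorem sat_sentence (A : Str U B) {φ : Fml U B} (h : φ.IsSentence) (σ ρ : Var → A.Dom) :
    Sat A φ σ ↔ Sat A φ ρ :=
  sat_congr A φ σ ρ (by intro v hv; rw [h] at hv; exact hv.elim)

/-- agreement on a set of variables -/
structure PC (A C : Str U B) (SB : Set B) (T : A.Dom → C.Dom → Prop) (V : Set Var)
    (σ : Var → A.Dom) (ρ : Var → C.Dom) : Prop where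
  rel : ∀ v ∈ V, T (σ v) (ρ v)
  eq : ∀ v ∈ V, ∀ w ∈ V, (σ v = σ w ↔ ρ v = ρ w)
  bin : ∀ R ∈ SB, ∀ v ∈ V, ∀ w ∈ V, (A.b R (σ v) (σ w) ↔ C.b R (ρ v) (ρ w))

theorem PC.mono {A C : Str U B} {SB : Set B} {T T' : A.Dom → C.Dom → Prop} {V W : Set Var}
    {σ : Var → A.Dom} {ρ : Var → C.Dom} (h : PC A C SB T V σ ρ) (hW : W ⊆ V)
    (hT : ∀ a c, T a c → T' a c) : PC A C SB T' W σ ρ :=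
  ⟨fun v hv => hT _ _ (h.rel v (hW hv)), fun v hv w hw => h.eq v (hW hv) w (hW hw),
    fun R hR v hv w hw => h.bin R hR v (hW hv) w (hW hw)⟩

structure Sys (A C : Str U B) (SU : Set U) (SB : Set B) (S : Set (Fml U B))
    (T : ℕ → A.Dom → C.Dom → Prop) (E : C.Dom → C.Dom → Prop) : Prop where
  mono : ∀ {k a c}, T (k+1) a c → T k a c
  un : ∀ {k a c}, T k a c → ∀ P ∈ SU, (A.u P a ↔ C.u P c)
  lp : ∀ {k a c}, T k a c → ∀ R ∈ SB, (A.b R a a ↔ C.b R c c)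
  globA : ∀ k a, ∃ c, T k a c
  globC : ∀ k c, ∃ a, T k a c
  forth : ∀ {k a c}, T (k+1) a c → ∀ a', a' ≠ a → Guarded2 A SB a a' →
    ∃ c0 c', E c c0 ∧ T k a c0 ∧ c' ≠ c0 ∧
      (∀ R ∈ SB, (A.b R a a' ↔ C.b R c0 c') ∧ (A.b R a' a ↔ C.b R c' c0)) ∧ T k a' c'
  back : ∀ {k a c}, T (k+1) a c → ∀ c', c' ≠ c → Guarded2 C SB c c' →
    ∃ a', a' ≠ a ∧
      (∀ R ∈ SB, (A.b R a a' ↔ C.b R c c') ∧ (A.b R a' a ↔ C.b R c' c)) ∧ T k a' c'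
  Erefl : ∀ c, E c c
  Einv : ∀ χ ∈ S, ∀ c c0, E c c0 → (Sat C χ (fun _ => c) ↔ Sat C χ (fun _ => c0))

theorem pc_single {A C : Str U B} {SB : Set B} {T : A.Dom → C.Dom → Prop} (v : Var)
    (σ : Var → A.Dom) (ρ : Var → C.Dom) (d : A.Dom) (e : C.Dom) (h : T d e)
    (hl : ∀ R ∈ SB, (A.b R d d ↔ C.b R e e)) :
    PC A C SB T {v} (upd σ v d) (upd ρ v e) := by
  constructor
  · rintro w rfl; simpa [upd] using h
  · rintro w rfl u rfl; simp
  · rintro R hR w rfl u rfl; simpa [upd] using hl R hR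

theorem pc_pair {A C : Str U B} {SB : Set B} {T : A.Dom → C.Dom → Prop} (v w : Var) (hvw : w ≠ v)
    (σ : Var → A.Dom) (ρ : Var → C.Dom) (d : A.Dom) (e : C.Dom) (h : T d e)
    (hw : T (σ w) (ρ w)) (heq : d = σ w ↔ e = ρ w)
    (hl : ∀ R ∈ SB, (A.b R d d ↔ C.b R e e))
    (hlw : ∀ R ∈ SB, (A.b R (σ w) (σ w) ↔ C.b R (ρ w) (ρ w)))
    (hR : ∀ R ∈ SB, (A.b R (σ w) d ↔ C.b R (ρ w) e) ∧ (A.b R d (σ w) ↔ C.b R e (ρ w))) :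
    PC A C SB T Set.univ (upd σ v d) (upd ρ v e) := by
  have hu : ∀ u : Var, u = v ∨ u = w := by
    intro u; cases u <;> cases v <;> cases w <;> simp_all
  have heq' : σ w = d ↔ ρ w = e := by rw [eq_comm, heq, eq_comm]
  constructor
  · intro u _
    rcases hu u with rfl | rfl <;> simp [upd, *]
  · intro u _ u' _
    rcases hu u with rfl | rfl <;> rcases hu u' with rfl | rfl <;> simp [upd, *]
  · intro R h u _ u' _
    have := hR R h; have h1 := hl R h; have h2 := hlw R h
    rcases hu u with rfl | rfl <;> rcases hu u' with rfl | rfl <;> simp [upd, *]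

theorem other_var (v : Var) : ∃ w, w ≠ v ∧ ∀ u, u = v ∨ u = w := by
  cases v
  · exact ⟨Var.y, by simp, by intro u; cases u <;> simp⟩
  · exact ⟨Var.x, by simp, by intro u; cases u <;> simp⟩

theorem atom_cases {α : Fml U B} (hα : α.IsAtom) {v w : Var} (hw : w ≠ v)
    (huw : ∀ u, u = v ∨ u = w) (hv : v ∈ α.free) :
    α.free = {v} ∨ (α.free = Set.univ ∧
      (α = .eqv v w ∨ α = .eqv w v ∨ ∃ R, α = .batom R v w ∨ α = .batom R w v)) := by
  have huniv : ({v, w} : Set Var) = Set.univ := by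
    ext u; simpa using huw u
  have huniv' : ({w, v} : Set Var) = Set.univ := by
    ext u; simpa [or_comm] using huw u
  cases α with
  | uatom P u => left; simp [Fml.free] at *; exact hv.symm
  | batom R u u' =>
    rcases huw u with rfl | rfl <;> rcases huw u' with rfl | rfl <;> simp_all [Fml.free]
  | eqv u u' =>
    rcases huw u with rfl | rfl <;> rcases huw u' with rfl | rfl <;> simp_all [Fml.free]
  | _ => exact hα.elim

theorem atom_sat {A C : Str U B} {SU : Set U} {SB : Set B}
    {T : A.Dom → C.Dom → Prop}
    (un : ∀ {a c}, T a c → ∀ P ∈ SU, (A.u P a ↔ C.u P c))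
    {α : Fml U B} (hα : α.IsAtom) (hU : α.upreds ⊆ SU) (hB : α.bpreds ⊆ SB)
    {σ : Var → A.Dom} {ρ : Var → C.Dom} (h : PC A C SB T α.free σ ρ) :
    Sat A α σ ↔ Sat C α ρ := by
  cases α with
  | uatom P v => exact un (h.rel v (by simp [Fml.free])) P (hU (by simp [Fml.upreds]))
  | batom R v w =>
    exact h.bin R (hB (by simp [Fml.bpreds])) v (by simp [Fml.free]) w (by simp [Fml.free])
  | eqv v w => exact h.eq v (by simp [Fml.free]) w (by simp [Fml.free])
  | _ => exact hα.elim

theorem ex_transfer {A C : Str U B} {SB : Set B}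
    {T T' : A.Dom → C.Dom → Prop} {E : C.Dom → C.Dom → Prop}
    (hTT : ∀ a c, T a c → T' a c)
    (lp : ∀ a c, T' a c → ∀ R ∈ SB, (A.b R a a ↔ C.b R c c))
    (glob : ∀ a, ∃ c, T' a c) (Erefl : ∀ c, E c c)
    (forth : ∀ a c, T a c → ∀ a', a' ≠ a → Guarded2 A SB a a' →
      ∃ c0 c', E c c0 ∧ T' a c0 ∧ c' ≠ c0 ∧
        (∀ R ∈ SB, (A.b R a a' ↔ C.b R c0 c') ∧ (A.b R a' a ↔ C.b R c' c0)) ∧ T' a' c')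
    {α : Fml U B} (hα : α.IsAtom) (hB : α.bpreds ⊆ SB) {v : Var} (hv : v ∈ α.free)
    {σ : Var → A.Dom} {ρ : Var → C.Dom} (h : PC A C SB T (α.free \ {v}) σ ρ)
    (d : A.Dom) (hd : Sat A α (upd σ v d)) :
    ∃ ρ' e, (∀ w ∈ α.free \ {v}, E (ρ w) (ρ' w)) ∧
      PC A C SB T' α.free (upd σ v d) (upd ρ' v e) := by
  obtain ⟨w, hw, huw⟩ := other_var v
  rcases atom_cases hα hw huw hv with hf | ⟨hf, hc⟩
  · obtain ⟨e, he⟩ := glob d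
    refine ⟨ρ, e, fun w _ => Erefl _, ?_⟩
    rw [hf]
    exact pc_single v σ ρ d e he (lp _ _ he)
  · have hwm : w ∈ α.free \ {v} := ⟨by rw [hf]; trivial, hw⟩
    have hT := h.rel w hwm
    have hl := lp _ _ (hTT _ _ hT)
    rw [hf] 
    by_cases hdw : d = σ w
    · subst hdw
      exact ⟨ρ, ρ w, fun w _ => Erefl _, pc_pair v w hw σ ρ _ _ (hTT _ _ hT) (hTT _ _ hT)
        (by simp) hl hl (fun R hR => ⟨hl R hR, hl R hR⟩)⟩
    · have hg : Guarded2 A SB (σ w) d := by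
        rcases hc with rfl | rfl | ⟨R, rfl | rfl⟩
        · simp [Sat, upd, hw] at hd; exact (hdw hd).elim
        · simp [Sat, upd, hw] at hd; exact (hdw hd.symm).elim
        · simp [Sat, upd, hw] at hd; exact ⟨R, hB (by simp [Fml.bpreds]), Or.inr hd⟩
        · simp [Sat, upd, hw] at hd; exact ⟨R, hB (by simp [Fml.bpreds]), Or.inl hd⟩
      obtain ⟨c0, c', hE, hT0, hne, hR, hT'⟩ := forth _ _ hT d hdw hg
      refine ⟨fun _ => c0, c', ?_, ?_⟩
      · rintro u ⟨_, hu⟩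
        rcases huw u with rfl | rfl
        · exact (hu rfl).elim
        · exact hE
      · exact pc_pair v w hw σ _ _ _ hT' hT0 (by simp [hdw, hne]) (lp _ _ hT') (lp _ _ hT0) hR

theorem PC.flip {A C : Str U B} {SB : Set B} {T : A.Dom → C.Dom → Prop} {V : Set Var}
    {σ : Var → A.Dom} {ρ : Var → C.Dom} (h : PC A C SB T V σ ρ) :
    PC C A SB (fun c a => T a c) V ρ σ :=
  ⟨h.rel, fun v hv w hw => (h.eq v hv w hw).symm,
    fun R hR v hv w hw => (h.bin R hR v hv w hw).symm⟩

theorem Einv_assign {C : Str U B} {χ : Fml U B} {E : C.Dom → C.Dom → Prop}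
    (Einv : ∀ c c0, E c c0 → (Sat C χ (fun _ => c) ↔ Sat C χ (fun _ => c0)))
    {v : Var} (hv : v ∉ χ.free) {ρ ρ' : Var → C.Dom} (h : ∀ w ∈ χ.free, E (ρ w) (ρ' w)) :
    Sat C χ ρ ↔ Sat C χ ρ' := by
  obtain ⟨w, hw, huw⟩ := other_var v
  have key : ∀ ρ : Var → C.Dom, Sat C χ ρ ↔ Sat C χ (fun _ => ρ w) := by
    intro ρ
    apply sat_congr
    intro u hu
    rcases huw u with rfl | rfl
    · exact (hv hu).elim
    · rfl
  by_cases hwf : w ∈ χ.free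
  · rw [key ρ, key ρ']; exact Einv _ _ (h w hwf)
  · apply sat_congr
    intro u hu
    rcases huw u with rfl | rfl
    · exact (hv hu).elim
    · exact (hwf hu).elim

theorem self_mem_Subf (χ : Fml U B) : χ ∈ χ.Subf := by
  cases χ <;> simp [Fml.Subf]

theorem Sys.truth {A C : Str U B} {SU : Set U} {SB : Set B} {S : Set (Fml U B)}
    {T : ℕ → A.Dom → C.Dom → Prop} {E : C.Dom → C.Dom → Prop}
    (H : Sys A C SU SB S T E) {χ : Fml U B} (hχ : IsGF2 χ) :
    χ.Subf ⊆ S → χ.upreds ⊆ SU → χ.bpreds ⊆ SB → ∀ k, χ.gdepth ≤ k → ∀ σ ρ,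
      PC A C SB (T k) χ.free σ ρ → (Sat A χ σ ↔ Sat C χ ρ) := by
  induction hχ with
  | uatom P v => intro _ hU hB k _ σ ρ h; exact atom_sat (fun h => H.un h) (by trivial) hU hB h
  | batom R v w => intro _ hU hB k _ σ ρ h; exact atom_sat (fun h => H.un h) (by trivial) hU hB h
  | eqv v w => intro _ hU hB k _ σ ρ h; exact atom_sat (fun h => H.un h) (by trivial) hU hB h
  | fls => intro _ _ _ k _ σ ρ h; simp [Sat]
  | neg _ ih =>
    intro hS hU hB k hk σ ρ h
    simp only [Sat]
    rw [ih (fun x hx => hS (by simp [Fml.Subf, hx])) hU hB k hk σ ρ h]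
  | conj _ _ ih1 ih2 =>
    intro hS hU hB k hk σ ρ h
    simp only [Fml.gdepth, sup_le_iff] at hk
    simp only [Sat]
    rw [ih1 (fun x hx => hS (by simp [Fml.Subf, hx])) (fun x hx => hU (Or.inl hx))
        (fun x hx => hB (Or.inl hx)) k hk.1 σ ρ (h.mono (fun _ hx => Or.inl hx) (fun _ _ h => h)),
      ih2 (fun x hx => hS (by simp [Fml.Subf, hx])) (fun x hx => hU (Or.inr hx))
        (fun x hx => hB (Or.inr hx)) k hk.2 σ ρ (h.mono (fun _ hx => Or.inr hx) (fun _ _ h => h))]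
  | disj _ _ ih1 ih2 =>
    intro hS hU hB k hk σ ρ h
    simp only [Fml.gdepth, sup_le_iff] at hk
    simp only [Sat]
    rw [ih1 (fun x hx => hS (by simp [Fml.Subf, hx])) (fun x hx => hU (Or.inl hx))
        (fun x hx => hB (Or.inl hx)) k hk.1 σ ρ (h.mono (fun _ hx => Or.inl hx) (fun _ _ h => h)),
      ih2 (fun x hx => hS (by simp [Fml.Subf, hx])) (fun x hx => hU (Or.inr hx))
        (fun x hx => hB (Or.inr hx)) k hk.2 σ ρ (h.mono (fun _ hx => Or.inr hx) (fun _ _ h => h))]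
  | impl _ _ ih1 ih2 =>
    intro hS hU hB k hk σ ρ h
    simp only [Fml.gdepth, sup_le_iff] at hk
    simp only [Sat]
    rw [ih1 (fun x hx => hS (by simp [Fml.Subf, hx])) (fun x hx => hU (Or.inl hx))
        (fun x hx => hB (Or.inl hx)) k hk.1 σ ρ (h.mono (fun _ hx => Or.inl hx) (fun _ _ h => h)),
      ih2 (fun x hx => hS (by simp [Fml.Subf, hx])) (fun x hx => hU (Or.inr hx))
        (fun x hx => hB (Or.inr hx)) k hk.2 σ ρ (h.mono (fun _ hx => Or.inr hx) (fun _ _ h => h))]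
  | @allG v α φ hα hφ hfr ih =>
    intro hS hU hB k hk σ ρ h
    obtain ⟨k, rfl⟩ : ∃ k', k = k' + 1 := ⟨k - 1, by simp [Fml.gdepth] at hk; omega⟩
    have hkφ : φ.gdepth ≤ k := by simp [Fml.gdepth] at hk; omega
    have hvα : v ∈ α.free := hfr (Or.inr rfl)
    have hfree : (Fml.all v (.impl α φ)).free = α.free \ {v} := by
      have : φ.free ⊆ α.free := fun u hu => hfr (Or.inl hu)
      simp [Fml.free, Set.union_eq_self_of_subset_right this]
    have ih' := ih (fun x hx => hS (by simp [Fml.Subf, hx])) (fun x hx => hU (Or.inr hx))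
        (fun x hx => hB (Or.inr hx)) k hkφ
    have hαU : α.upreds ⊆ SU := fun x hx => hU (Or.inl hx)
    have hαB : α.bpreds ⊆ SB := fun x hx => hB (Or.inl hx)
    have inner : ∀ σ ρ, PC A C SB (T k) α.free σ ρ →
        ((Sat A α σ ↔ Sat C α ρ) ∧ (Sat A φ σ ↔ Sat C φ ρ)) := fun σ ρ hp =>
      ⟨atom_sat (fun h => H.un h) hα hαU hαB hp,
        ih' σ ρ (hp.mono (fun u hu => hfr (Or.inl hu)) (fun _ _ h => h))⟩
    rw [hfree] at h
    constructor
    · intro hs e he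
      obtain ⟨σ', d, hE, hp⟩ := ex_transfer (E := Eq) (fun a c => H.mono) (fun a c h R hR => (H.lp h R hR).symm)
        (H.globC k) (fun _ => rfl) (fun c a h c' hne hg => by
          obtain ⟨a', h1, h2, h3⟩ := H.back h c' hne hg
          exact ⟨a, a', rfl, H.mono h, h1, fun R hR => ⟨(h2 R hR).1.symm, (h2 R hR).2.symm⟩, h3⟩)
        hα hαB hvα h.flip e he
      have hs' : Sat A (.all v (.impl α φ)) σ' :=
        (sat_congr A _ σ σ' (fun w hw => hE w (by rwa [← hfree]))).1 hs
      have := inner _ _ hp.flip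
      exact this.2.1 (hs' d (this.1.2 he))
    · intro hs d hd
      obtain ⟨ρ', e, hE, hp⟩ := ex_transfer (E := E) (fun a c => H.mono) (fun a c h => H.lp h)
        (H.globA k) H.Erefl (fun c a h => H.forth h) hα hαB hvα h d hd
      have hs' : Sat C (.all v (.impl α φ)) ρ' :=
        (Einv_assign (H.Einv _ (hS (self_mem_Subf _))) (v := v) (by simp [Fml.free])
          (fun w hw => hE w (by rwa [← hfree]))).1 hs
      have := inner _ _ hp
      exact this.2.2 (hs' e (this.1.1 hd))
  | @exG v α φ hα hφ hfr ih =>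
    intro hS hU hB k hk σ ρ h
    obtain ⟨k, rfl⟩ : ∃ k', k = k' + 1 := ⟨k - 1, by simp [Fml.gdepth] at hk; omega⟩
    have hkφ : φ.gdepth ≤ k := by simp [Fml.gdepth] at hk; omega
    have hvα : v ∈ α.free := hfr (Or.inr rfl)
    have hfree : (Fml.ex v (.conj α φ)).free = α.free \ {v} := by
      have : φ.free ⊆ α.free := fun u hu => hfr (Or.inl hu)
      simp [Fml.free, Set.union_eq_self_of_subset_right this]
    have ih' := ih (fun x hx => hS (by simp [Fml.Subf, hx])) (fun x hx => hU (Or.inr hx))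
        (fun x hx => hB (Or.inr hx)) k hkφ
    have hαU : α.upreds ⊆ SU := fun x hx => hU (Or.inl hx)
    have hαB : α.bpreds ⊆ SB := fun x hx => hB (Or.inl hx)
    have inner : ∀ σ ρ, PC A C SB (T k) α.free σ ρ →
        ((Sat A α σ ↔ Sat C α ρ) ∧ (Sat A φ σ ↔ Sat C φ ρ)) := fun σ ρ hp =>
      ⟨atom_sat (fun h => H.un h) hα hαU hαB hp,
        ih' σ ρ (hp.mono (fun u hu => hfr (Or.inl hu)) (fun _ _ h => h))⟩
    rw [hfree] at h
    constructor
    · rintro ⟨d, hd, hd'⟩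
      obtain ⟨ρ', e, hE, hp⟩ := ex_transfer (E := E) (fun a c => H.mono) (fun a c h => H.lp h)
        (H.globA k) H.Erefl (fun c a h => H.forth h) hα hαB hvα h d hd
      have := inner _ _ hp
      exact (Einv_assign (H.Einv _ (hS (self_mem_Subf _))) (v := v) (by simp [Fml.free])
          (fun w hw => hE w (by rwa [← hfree]))).2 ⟨e, this.1.1 hd, this.2.1 hd'⟩
    · rintro ⟨e, he, he'⟩
      obtain ⟨σ', d, hE, hp⟩ := ex_transfer (E := Eq) (fun a c => H.mono) (fun a c h R hR => (H.lp h R hR).symm)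
        (H.globC k) (fun _ => rfl) (fun c a h c' hne hg => by
          obtain ⟨a', h1, h2, h3⟩ := H.back h c' hne hg
          exact ⟨a, a', rfl, H.mono h, h1, fun R hR => ⟨(h2 R hR).1.symm, (h2 R hR).2.symm⟩, h3⟩)
        hα hαB hvα h.flip e he
      have := inner _ _ hp.flip
      exact (sat_congr A _ σ σ' (fun w hw => hE w (by rwa [← hfree]))).2
        ⟨d, this.1.2 he, this.2.2 he'⟩

theorem Sys.sentence {A C : Str U B} {SU : Set U} {SB : Set B} {S : Set (Fml U B)}
    {T : ℕ → A.Dom → C.Dom → Prop} {E : C.Dom → C.Dom → Prop}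
    (H : Sys A C SU SB S T E) {χ : Fml U B} (hχ : IsGF2 χ) (hs : χ.IsSentence)
    (hS : χ.Subf ⊆ S) (hU : χ.upreds ⊆ SU) (hB : χ.bpreds ⊆ SB) :
    SatS A χ ↔ SatS C χ := by
  have key : ∀ σ ρ, Sat A χ σ ↔ Sat C χ ρ := fun σ ρ =>
    H.truth hχ hS hU hB _ le_rfl σ ρ (by
      rw [hs]; exact ⟨fun v hv => hv.elim, fun v hv => hv.elim, fun R _ v hv => hv.elim⟩)
  obtain ⟨a⟩ := A.nonempty
  obtain ⟨c⟩ := C.nonempty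
  exact ⟨fun h ρ => (key (fun _ => a) ρ).1 (h _), fun h σ => (key σ (fun _ => c)).2 (h _)⟩

/-! ### k-bisimilarity -/

theorem atp1_un {A C : Str U B} {SU : Set U} {SB : Set B} {a : A.Dom} {c : C.Dom}
    (h : atp1 A SU SB a = atp1 C SU SB c) {P : U} (hP : P ∈ SU) : A.u P a ↔ C.u P c := by
  have := Set.ext_iff.1 h (.ua P .x)
  simpa [atp1, Atom2.onlyX, Atom2.inSig, Atom2.holds, vval, hP] using this

theorem atp1_lp {A C : Str U B} {SU : Set U} {SB : Set B} {a : A.Dom} {c : C.Dom}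
    (h : atp1 A SU SB a = atp1 C SU SB c) {R : B} (hR : R ∈ SB) : A.b R a a ↔ C.b R c c := by
  have := Set.ext_iff.1 h (.ba R .x .x)
  simpa [atp1, Atom2.onlyX, Atom2.inSig, Atom2.holds, vval, hR] using this

theorem atp1_iff {A C : Str U B} {SU : Set U} {SB : Set B} {a : A.Dom} {c : C.Dom} :
    atp1 A SU SB a = atp1 C SU SB c ↔
      (∀ P ∈ SU, (A.u P a ↔ C.u P c)) ∧ (∀ R ∈ SB, (A.b R a a ↔ C.b R c c)) := by
  refine ⟨fun h => ⟨fun P hP => atp1_un h hP, fun R hR => atp1_lp h hR⟩, fun ⟨h1, h2⟩ => ?_⟩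
  ext α
  cases α with
  | ua P v =>
    have := h1 P
    cases v <;> simp [atp1, Atom2.onlyX, Atom2.inSig, Atom2.holds, vval]; tauto
  | ba R v w =>
    have := h2 R
    cases v <;> cases w <;> simp [atp1, Atom2.onlyX, Atom2.inSig, Atom2.holds, vval]; tauto

theorem atp2_iff {A C : Str U B} {SU : Set U} {SB : Set B} {a a' : A.Dom} {c c' : C.Dom} :
    atp2 A SU SB a a' = atp2 C SU SB c c' ↔
      atp1 A SU SB a = atp1 C SU SB c ∧ atp1 A SU SB a' = atp1 C SU SB c' ∧
      (∀ R ∈ SB, (A.b R a a' ↔ C.b R c c') ∧ (A.b R a' a ↔ C.b R c' c)) := by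
  rw [atp1_iff, atp1_iff]
  constructor
  · intro h
    have hu : ∀ P v, _ := fun P v => Set.ext_iff.1 h (.ua P v)
    have hb : ∀ R v w, _ := fun R v w => Set.ext_iff.1 h (.ba R v w)
    simp only [atp2, Atom2.inSig, Atom2.holds, Set.mem_ofPred_eq, and_congr_right_iff] at hu hb
    exact ⟨⟨fun P hP => hu P .x hP, fun R hR => hb R .x .x hR⟩,
      ⟨fun P hP => hu P .y hP, fun R hR => hb R .y .y hR⟩,
      fun R hR => ⟨hb R .x .y hR, hb R .y .x hR⟩⟩
  · rintro ⟨⟨h1, h2⟩, ⟨h3, h4⟩, h5⟩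
    ext α
    cases α with
    | ua P v =>
      have := h1 P; have := h3 P
      cases v <;> simp only [atp2, Atom2.inSig, Atom2.holds, vval, Set.mem_ofPred_eq] <;> tauto
    | ba R v w =>
      have := h2 R; have := h4 R; have := h5 R
      cases v <;> cases w <;> simp only [atp2, Atom2.inSig, Atom2.holds, vval, Set.mem_ofPred_eq] <;> tauto

theorem guarded_congr {A C : Str U B} {SU : Set U} {SB : Set B} {a a' : A.Dom} {c c' : C.Dom}
    (h : atp2 A SU SB a a' = atp2 C SU SB c c') : Guarded2 A SB a a' ↔ Guarded2 C SB c c' := by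
  have := (atp2_iff.1 h).2.2
  constructor
  · rintro ⟨R, hR, h⟩; exact ⟨R, hR, by rwa [← (this R hR).1, ← (this R hR).2]⟩
  · rintro ⟨R, hR, h⟩; exact ⟨R, hR, by rwa [(this R hR).1, (this R hR).2]⟩

theorem KBisim.atp {A C : Str U B} {SU : Set U} {SB : Set B} {k : ℕ} {a : A.Dom} {c : C.Dom}
    (h : KBisim A C SU SB k a c) : atp1 A SU SB a = atp1 C SU SB c := by
  cases k with
  | zero => exact h
  | succ k => exact h.1

theorem KBisim.pred {A C : Str U B} {SU : Set U} {SB : Set B} {k : ℕ} : ∀ {a : A.Dom} {c : C.Dom},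
    KBisim A C SU SB (k+1) a c → KBisim A C SU SB k a c := by
  induction k with
  | zero => intro a c h; exact h.1
  | succ k ih =>
    intro a c h
    refine ⟨h.1, fun a' h1 h2 => ?_, fun c' h1 h2 => ?_⟩
    · obtain ⟨c', p, q, r⟩ := h.2.1 a' h1 h2
      exact ⟨c', p, q, ih r⟩
    · obtain ⟨c', p, q, r⟩ := h.2.2 c' h1 h2
      exact ⟨c', p, q, ih r⟩

theorem KBisim.le {A C : Str U B} {SU : Set U} {SB : Set B} {k l : ℕ} (hkl : k ≤ l) {a : A.Dom}
    {c : C.Dom} (h : KBisim A C SU SB l a c) : KBisim A C SU SB k a c := by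
  induction hkl with
  | refl => exact h
  | step _ ih => exact ih h.pred

theorem KBisim.trans {A C D : Str U B} {SU : Set U} {SB : Set B} {k : ℕ} :
    ∀ {a : A.Dom} {c : C.Dom} {d : D.Dom},
    KBisim A C SU SB k a c → KBisim C D SU SB k c d → KBisim A D SU SB k a d := by
  induction k with
  | zero => intro a c d h h'; exact Eq.trans (show _ = _ from h) h'
  | succ k ih =>
    intro a c d h h'
    refine ⟨h.1.trans h'.1, fun a' h1 h2 => ?_, fun d' h1 h2 => ?_⟩
    · obtain ⟨c', p, q, r⟩ := h.2.1 a' h1 h2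
      obtain ⟨d', p', q', r'⟩ := h'.2.1 c' p ((guarded_congr q).1 h2)
      exact ⟨d', p', q.trans q', ih r r'⟩
    · obtain ⟨c', p, q, r⟩ := h'.2.2 d' h1 h2
      obtain ⟨a', p', q', r'⟩ := h.2.2 c' p ((guarded_congr q).2 h2)
      exact ⟨a', p', q'.trans q, ih r' r⟩

theorem IsBisim.kbisim {A C : Str U B} {SU : Set U} {SB : Set B} {Z : A.Dom → C.Dom → Prop}
    (hZ : IsBisim A C SU SB Z) {k : ℕ} : ∀ {a : A.Dom} {c : C.Dom}, Z a c →
      KBisim A C SU SB k a c := by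
  induction k with
  | zero => intro a c h; exact hZ.atom_eq h
  | succ k ih =>
    intro a c h
    refine ⟨hZ.atom_eq h, fun a' h1 h2 => ?_, fun d' h1 h2 => ?_⟩
    · obtain ⟨c', p, q, r⟩ := hZ.forth h a' h1 h2
      exact ⟨c', p, q, ih r⟩
    · obtain ⟨c', p, q, r⟩ := hZ.back h d' h1 h2
      exact ⟨c', p, q, ih r⟩

theorem Bisim.trans {A C D : Str U B} {SU : Set U} {SB : Set B} {a : A.Dom} {c : C.Dom} {d : D.Dom}
    (h : Bisim A C SU SB a c) (h' : Bisim C D SU SB c d) : Bisim A D SU SB a d := by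
  obtain ⟨Z, hZ, hac⟩ := h
  obtain ⟨Z', hZ', hcd⟩ := h'
  refine ⟨fun a d => ∃ c, Z a c ∧ Z' c d, ⟨?_, ?_, ?_⟩, c, hac, hcd⟩
  · rintro a d ⟨c, h, h'⟩; exact (hZ.atom_eq h).trans (hZ'.atom_eq h')
  · rintro a d ⟨c, h, h'⟩ a' h1 h2
    obtain ⟨c', p, q, r⟩ := hZ.forth h a' h1 h2
    obtain ⟨d', p', q', r'⟩ := hZ'.forth h' c' p ((guarded_congr q).1 h2)
    exact ⟨d', p', q.trans q', c', r, r'⟩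
  · rintro a d ⟨c, h, h'⟩ d' h1 h2
    obtain ⟨c', p, q, r⟩ := hZ'.back h' d' h1 h2
    obtain ⟨a', p', q', r'⟩ := hZ.back h c' p ((guarded_congr q).2 h2)
    exact ⟨a', p', q'.trans q, c', r', r⟩

/-- globally k-bisimilar structures (for all k) satisfy the same GF2 sentences -/
theorem sentence_of_kbisim {A C : Str U B} {SU : Set U} {SB : Set B}
    (h1 : ∀ k a, ∃ c, KBisim A C SU SB k a c) (h2 : ∀ k c, ∃ a, KBisim A C SU SB k a c)
    {χ : Fml U B} (hχ : IsGF2 χ) (hs : χ.IsSentence)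
    (hU : χ.upreds ⊆ SU) (hB : χ.bpreds ⊆ SB) : SatS A χ ↔ SatS C χ := by
  refine Sys.sentence (S := Set.univ) (T := fun k => KBisim A C SU SB k) (E := Eq) ?_ hχ hs
    (Set.subset_univ _) hU hB
  refine ⟨KBisim.pred, fun h P hP => atp1_un h.atp hP, fun h R hR => atp1_lp h.atp hR, h1, h2,
    ?_, ?_, fun _ => rfl, by rintro χ _ c _ rfl; rfl⟩
  · intro k a c h a' p q
    obtain ⟨c', p', q', r'⟩ := h.2.1 a' p q
    exact ⟨c, c', rfl, h.pred, p', (atp2_iff.1 q').2.2, r'⟩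
  · intro k a c h c' p q
    obtain ⟨a', p', q', r'⟩ := h.2.2 c' p q
    exact ⟨a', p', (atp2_iff.1 q').2.2, r'⟩

/-! ### unravelling -/

structure ESys (U B : Type) where
  V : Type
  ne : Nonempty V
  u : U → V → Prop
  lp : B → V → Prop
  real : V → Set B × Set B → V → Prop
  real_ne : ∀ {v κ w}, real v κ w → κ.1.Nonempty ∨ κ.2.Nonempty
  real_symm : ∀ {v κ w}, real v κ w → real w κ.swap v

namespace ESys

abbrev Node (X : ESys U B) : Type := X.V × List ((Set B × Set B) × X.V)

def par (X : ESys U B) (p q : X.Node) : Prop :=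
  ∃ κ, q.2 = (κ, p.1) :: p.2 ∧ X.real p.1 κ q.1

def bb (X : ESys U B) (R : B) (p q : X.Node) : Prop :=
  (p = q ∧ X.lp R p.1) ∨ (∃ κ, q.2 = (κ, p.1) :: p.2 ∧ X.real p.1 κ q.1 ∧ R ∈ κ.1) ∨
    (∃ κ, p.2 = (κ, q.1) :: q.2 ∧ X.real q.1 κ p.1 ∧ R ∈ κ.2)

theorem par_len {X : ESys U B} {p q : X.Node} {κ} (h : q.2 = (κ, p.1) :: p.2) :
    p.2.length < q.2.length := by rw [h]; simp

theorem bb_self {X : ESys U B} {R : B} {p : X.Node} : X.bb R p p ↔ X.lp R p.1 := by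
  constructor
  · rintro (⟨_, h⟩ | ⟨κ, h, _⟩ | ⟨κ, h, _⟩)
    · exact h
    · exact (lt_irrefl _ (par_len h)).elim
    · exact (lt_irrefl _ (par_len h)).elim
  · exact fun h => Or.inl ⟨rfl, h⟩

theorem bb_down {X : ESys U B} {R : B} {p q : X.Node} {κ} (h : q.2 = (κ, p.1) :: p.2)
    (hr : X.real p.1 κ q.1) : X.bb R p q ↔ R ∈ κ.1 := by
  have hl := par_len h
  constructor
  · rintro (⟨rfl, _⟩ | ⟨κ', h', _, hR⟩ | ⟨κ', h', _⟩)
    · exact (lt_irrefl _ hl).elim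
    · rw [h] at h'; simp at h'; rwa [h']
    · have := par_len h'; omega
  · exact fun hR => Or.inr (Or.inl ⟨κ, h, hr, hR⟩)

theorem bb_up {X : ESys U B} {R : B} {p q : X.Node} {κ} (h : q.2 = (κ, p.1) :: p.2)
    (hr : X.real p.1 κ q.1) : X.bb R q p ↔ R ∈ κ.2 := by
  have hl := par_len h
  constructor
  · rintro (⟨rfl, _⟩ | ⟨κ', h', _⟩ | ⟨κ', h', _, hR⟩)
    · exact (lt_irrefl _ hl).elim
    · have := par_len h'; omega
    · rw [h] at h'; simp at h'; rwa [h']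
  · exact fun hR => Or.inr (Or.inr ⟨κ, h, hr, hR⟩)

theorem bb_par {X : ESys U B} {R : B} {p q : X.Node} (hne : p ≠ q) (h : X.bb R p q) :
    X.par p q ∨ X.par q p := by
  rcases h with ⟨rfl, _⟩ | ⟨κ, h, hr, _⟩ | ⟨κ, h, hr, _⟩
  · exact (hne rfl).elim
  · exact Or.inl ⟨κ, h, hr⟩
  · exact Or.inr ⟨κ, h, hr⟩

theorem par_ne {X : ESys U B} {p q : X.Node} (h : X.par p q) : p ≠ q := by
  rintro rfl
  obtain ⟨κ, h, _⟩ := h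
  exact lt_irrefl _ (par_len h)

theorem par_bb {X : ESys U B} {p q : X.Node} (h : X.par p q) : ∃ R, X.bb R p q ∨ X.bb R q p := by
  obtain ⟨κ, h, hr⟩ := h
  rcases X.real_ne hr with ⟨R, hR⟩ | ⟨R, hR⟩
  · exact ⟨R, Or.inl ((bb_down h hr).2 hR)⟩
  · exact ⟨R, Or.inr ((bb_up h hr).2 hR)⟩

def forest (X : ESys U B) : Forest U B where
  Dom := X.Node
  nonempty := X.ne.elim fun v => ⟨(v, [])⟩
  u := fun P p => X.u P p.1
  b := X.bb
  parent := X.par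
  parent_unique := by
    rintro c p p' ⟨κ, h, _⟩ ⟨κ', h', _⟩
    rw [h] at h'
    simp at h'
    exact Prod.ext h'.1.2 h'.2
  parent_wf := by
    refine Subrelation.wf (r := InvImage (· < ·) (fun p : X.Node => p.2.length)) ?_
      (InvImage.wf _ wellFounded_lt)
    rintro p q ⟨κ, h, _⟩
    exact par_len h
  adj_iff := by
    intro p q
    constructor
    · rintro ⟨hne, R, h | h⟩
      · exact bb_par hne h
      · exact (bb_par (Ne.symm hne) h).symm
    · rintro (h | h)
      · exact ⟨par_ne h, par_bb h⟩
      · obtain ⟨R, hR⟩ := par_bb h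
        exact ⟨(par_ne h).symm, R, hR.symm⟩

theorem nbr {X : ESys U B} {p q : X.Node} (hne : q ≠ p) {R : B} (h : X.bb R p q ∨ X.bb R q p) :
    ∃ κ, X.real p.1 κ q.1 ∧ ∀ R, (X.bb R p q ↔ R ∈ κ.1) ∧ (X.bb R q p ↔ R ∈ κ.2) := by
  have : X.par p q ∨ X.par q p := by
    rcases h with h | h
    · exact bb_par (Ne.symm hne) h
    · exact (bb_par hne h).symm
  rcases this with ⟨κ, h, hr⟩ | ⟨κ, h, hr⟩
  · exact ⟨κ, hr, fun R => ⟨bb_down h hr, bb_up h hr⟩⟩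
  · exact ⟨κ.swap, X.real_symm hr, fun R => ⟨bb_up h hr, bb_down h hr⟩⟩

theorem child {X : ESys U B} (p : X.Node) {κ w} (hr : X.real p.1 κ w) :
    ∃ q : X.Node, q ≠ p ∧ q.1 = w ∧ ∀ R, (X.bb R p q ↔ R ∈ κ.1) ∧ (X.bb R q p ↔ R ∈ κ.2) := by
  refine ⟨(w, (κ, p.1) :: p.2), (par_ne (p := p) ⟨κ, rfl, hr⟩).symm, rfl, fun R => ?_⟩
  exact ⟨bb_down rfl hr, bb_up rfl hr⟩

theorem finiteOutdeg {X : ESys U B} (h : ∀ v, {z : (Set B × Set B) × X.V | X.real v z.1 z.2}.Finite) :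
    FiniteOutdeg X.forest.toStr := by
  intro p
  have hp : {q : X.Node | X.par q p}.Finite := by
    refine Set.Subsingleton.finite ?_
    intro q hq q' hq'
    exact X.forest.parent_unique hq hq'
  have hc : {q : X.Node | X.par p q}.Finite := by
    refine ((h p.1).image (fun z => ((z.2, (z.1, p.1) :: p.2) : X.Node))).subset ?_
    rintro ⟨w, l⟩ ⟨κ, hq, hr⟩
    refine ⟨(κ, w), hr, ?_⟩
    simp at hq
    simp [hq]
  refine (hc.union hp).subset ?_
  rintro q ⟨hne, R, hR⟩
  exact (X.forest.adj_iff p q).1 ⟨hne.symm, R, hR⟩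

def shift (X : ESys U B) (l : List ((Set B × Set B) × X.V)) (p : X.Node) : X.Node :=
  (p.1, p.2 ++ l)

theorem shift_inj (X : ESys U B) (l) : Function.Injective (X.shift l) := by
  rintro ⟨v, m⟩ ⟨v', m'⟩ h
  simpa [shift] using h

theorem shift_cons {X : ESys U B} {l} {p q : X.Node} {κ} :
    (X.shift l q).2 = (κ, (X.shift l p).1) :: (X.shift l p).2 ↔ q.2 = (κ, p.1) :: p.2 := by
  simp only [shift]
  rw [← List.cons_append, List.append_cancel_right_eq]

theorem shift_par {X : ESys U B} {l} {p q : X.Node} :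
    X.par (X.shift l p) (X.shift l q) ↔ X.par p q := by
  unfold par
  simp only [shift_cons]
  rfl

theorem shift_bb {X : ESys U B} {l} {R : B} {p q : X.Node} :
    X.bb R (X.shift l p) (X.shift l q) ↔ X.bb R p q := by
  unfold bb
  simp only [shift_cons, (X.shift_inj l).eq_iff]
  rfl

theorem shift_desc {X : ESys U B} {l} {p q : X.Node} (h : Relation.ReflTransGen X.par p q) :
    Relation.ReflTransGen X.par (X.shift l p) (X.shift l q) :=
  h.lift _ (fun _ _ h => shift_par.2 h)

theorem desc_shift {X : ESys U B} {l} {v : X.V} {q : X.Node}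
    (h : Relation.ReflTransGen X.par (v, l) q) :
    ∃ q', Relation.ReflTransGen X.par (v, []) q' ∧ X.shift l q' = q := by
  induction h with
  | refl => exact ⟨(v, []), .refl, by simp [shift]⟩
  | @tail b c _ hbc ih =>
    obtain ⟨b', hb', rfl⟩ := ih
    obtain ⟨κ, h, hr⟩ := hbc
    refine ⟨(c.1, (κ, b'.1) :: b'.2), hb'.tail ⟨κ, rfl, hr⟩, ?_⟩
    ext1
    · rfl
    · simp [h, shift]

theorem regular {X : ESys U B} [Finite X.V] : X.forest.Regular := by
  refine ⟨Set.range (fun v : X.V => ((v, []) : X.Node)), Set.finite_range _, ?_⟩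
  rintro ⟨v, l⟩
  refine ⟨(v, []), ⟨v, rfl⟩, ?_⟩
  have e0 : X.shift l (v, []) = (v, l) := by simp [shift]
  let f : X.forest.desc (v, []) → X.forest.desc (v, l) := fun c =>
    ⟨X.shift l c.1, by
      have := shift_desc (X := X) (l := l) c.2
      rw [e0] at this
      exact this⟩
  have hf : Function.Bijective f := by
    constructor
    · intro c d h
      exact Subtype.ext (X.shift_inj l (Subtype.ext_iff.1 h))
    · rintro ⟨q, hq⟩
      obtain ⟨q', h, e⟩ := desc_shift (X := X) hq
      exact ⟨⟨q', h⟩, Subtype.ext e⟩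
  refine ⟨Equiv.ofBijective f hf, e0, fun c d => ?_, fun P c => Iff.rfl, fun R c d => ?_⟩
  · exact (shift_par (X := X) (l := l)).symm
  · exact (shift_bb (X := X) (l := l)).symm

end ESys

/-! ### unravelling of a structure -/

def unravSys (M : Str U B) : ESys U B where
  V := M.Dom
  ne := M.nonempty
  u := M.u
  lp := fun R a => M.b R a a
  real := fun a κ a' => a' ≠ a ∧ κ = ({R | M.b R a a'}, {R | M.b R a' a}) ∧
    (κ.1.Nonempty ∨ κ.2.Nonempty)
  real_ne := fun h => h.2.2
  real_symm := by
    rintro v κ w ⟨h1, rfl, h2⟩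
    exact ⟨h1.symm, rfl, h2.symm⟩

theorem unrav_bisim (M : Str U B) (SU : Set U) (SB : Set B) :
    IsBisim M (unravSys M).forest.toStr SU SB (fun a p => a = p.1) := by
  have h1 : ∀ p : (unravSys M).Node, atp1 M SU SB p.1 =
      atp1 (unravSys M).forest.toStr SU SB p := by
    intro p
    refine atp1_iff.2 ?_
    exact ⟨fun P _ => Iff.rfl, fun R _ => (ESys.bb_self (X := unravSys M)).symm⟩
  constructor
  · rintro _ p rfl
    exact h1 p
  · rintro _ p rfl a' hne ⟨R, _, hR⟩
    obtain ⟨q, hqp, rfl, hq⟩ := ESys.child (X := unravSys M) p (w := a')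
      (κ := ({R | M.b R p.1 a'}, {R | M.b R a' p.1})) ⟨hne, rfl, hR.imp (fun h => ⟨R, h⟩) (fun h => ⟨R, h⟩)⟩
    exact ⟨q, hqp, atp2_iff.2 ⟨h1 p, h1 q, fun R _ => ⟨(hq R).1.symm, (hq R).2.symm⟩⟩, rfl⟩
  · rintro _ p rfl q hne ⟨R, _, hR⟩
    obtain ⟨κ, ⟨hr, rfl, _⟩, hq⟩ := ESys.nbr (X := unravSys M) hne hR
    exact ⟨q.1, hr, atp2_iff.2 ⟨h1 p, h1 q, fun R _ => ⟨(hq R).1.symm, (hq R).2.symm⟩⟩, rfl⟩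

theorem unrav_sat (M : Str U B) {χ : Fml U B} (hχ : IsGF2 χ) (hs : χ.IsSentence) :
    SatS M χ ↔ SatS (unravSys M).forest.toStr χ :=
  sentence_of_kbisim (SU := Set.univ) (SB := Set.univ)
    (fun _ a => ⟨((a, []) : (unravSys M).Node), (unrav_bisim M _ _).kbisim rfl⟩)
    (fun _ p => ⟨p.1, (unrav_bisim M _ _).kbisim rfl⟩) hχ hs (Set.subset_univ _) (Set.subset_univ _)

/-! ### regular forest models -/

theorem Subf_finite (θ : Fml U B) : θ.Subf.Finite := by
  induction θ <;> simp [Fml.Subf, *]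

theorem bpreds_finite (θ : Fml U B) : θ.bpreds.Finite := by
  induction θ <;> simp [Fml.bpreds, *]

theorem upred_atom {θ : Fml U B} {P : U} (h : P ∈ θ.upreds) : ∃ v, .uatom P v ∈ θ.Subf := by
  induction θ with
  | uatom Q v => simp [Fml.upreds] at h; exact ⟨v, by simp [Fml.Subf, h]⟩
  | batom | eqv | fls => simp [Fml.upreds] at h
  | neg φ ih | all v φ ih | ex v φ ih =>
    obtain ⟨v, hv⟩ := ih h; exact ⟨v, by simp [Fml.Subf, hv]⟩
  | conj φ ψ ih1 ih2 | disj φ ψ ih1 ih2 | impl φ ψ ih1 ih2 =>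
    rcases h with h | h
    · obtain ⟨v, hv⟩ := ih1 h; exact ⟨v, by simp [Fml.Subf, hv]⟩
    · obtain ⟨v, hv⟩ := ih2 h; exact ⟨v, by simp [Fml.Subf, hv]⟩

theorem bpred_atom {θ : Fml U B} {R : B} (h : R ∈ θ.bpreds) : ∃ v w, .batom R v w ∈ θ.Subf := by
  induction θ with
  | batom Q v w => simp [Fml.bpreds] at h; exact ⟨v, w, by simp [Fml.Subf, h]⟩
  | uatom | eqv | fls => simp [Fml.bpreds] at h
  | neg φ ih | all v φ ih | ex v φ ih =>
    obtain ⟨v, w, hv⟩ := ih h; exact ⟨v, w, by simp [Fml.Subf, hv]⟩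
  | conj φ ψ ih1 ih2 | disj φ ψ ih1 ih2 | impl φ ψ ih1 ih2 =>
    rcases h with h | h
    · obtain ⟨v, w, hv⟩ := ih1 h; exact ⟨v, w, by simp [Fml.Subf, hv]⟩
    · obtain ⟨v, w, hv⟩ := ih2 h; exact ⟨v, w, by simp [Fml.Subf, hv]⟩

/-- the type of `a` -/
def tpS (M : Str U B) (θ : Fml U B) (a : M.Dom) : Set (Fml U B) :=
  {χ | χ ∈ θ.Subf ∧ Sat M χ (fun _ => a)}

theorem tpS_sat {M : Str U B} {θ : Fml U B} {a a' : M.Dom} (h : tpS M θ a = tpS M θ a')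
    {χ : Fml U B} (hχ : χ ∈ θ.Subf) : Sat M χ (fun _ => a) ↔ Sat M χ (fun _ => a') := by
  have := Set.ext_iff.1 h χ
  simpa [tpS, hχ] using this

theorem tpS_un {M : Str U B} {θ : Fml U B} {a a' : M.Dom} (h : tpS M θ a = tpS M θ a')
    {P : U} (hP : P ∈ θ.upreds) : M.u P a ↔ M.u P a' := by
  obtain ⟨v, hv⟩ := upred_atom hP
  exact tpS_sat h hv

theorem tpS_lp {M : Str U B} {θ : Fml U B} {a a' : M.Dom} (h : tpS M θ a = tpS M θ a')
    {R : B} (hR : R ∈ θ.bpreds) : M.b R a a ↔ M.b R a' a' := by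
  obtain ⟨v, w, hv⟩ := bpred_atom hR
  exact tpS_sat h hv

def tySys (M : Str U B) (θ : Fml U B) : ESys U B where
  V := Set.range (tpS M θ)
  ne := M.nonempty.elim fun a => ⟨⟨_, a, rfl⟩⟩
  u := fun P t => ∃ a, tpS M θ a = t.1 ∧ P ∈ θ.upreds ∧ M.u P a
  lp := fun R t => ∃ a, tpS M θ a = t.1 ∧ R ∈ θ.bpreds ∧ M.b R a a
  real := fun t κ t' => ∃ a a', tpS M θ a = t.1 ∧ tpS M θ a' = t'.1 ∧ a' ≠ a ∧
    κ = ({R | R ∈ θ.bpreds ∧ M.b R a a'}, {R | R ∈ θ.bpreds ∧ M.b R a' a}) ∧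
    (κ.1.Nonempty ∨ κ.2.Nonempty)
  real_ne := fun ⟨_, _, h⟩ => h.2.2.2.2
  real_symm := by
    rintro v κ w ⟨a, a', h1, h2, h3, rfl, h4⟩
    exact ⟨a', a, h2, h1, h3.symm, rfl, h4.symm⟩

instance (M : Str U B) (θ : Fml U B) : Finite (tySys M θ).V := by
  refine Set.Finite.to_subtype ((Subf_finite θ).finite_subsets.subset ?_)
  rintro _ ⟨a, rfl⟩ χ h
  exact h.1

theorem tySys_finiteOutdeg (M : Str U B) (θ : Fml U B) :
    FiniteOutdeg (tySys M θ).forest.toStr := by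
  refine ESys.finiteOutdeg fun v => ?_
  have hB := (bpreds_finite θ).finite_subsets
  refine ((hB.prod hB).prod (Set.finite_univ (α := (tySys M θ).V))).subset ?_
  rintro ⟨κ, w⟩ ⟨a, a', _, _, _, h, _⟩
  simp only at h
  subst h
  exact ⟨⟨fun R h => h.1, fun R h => h.1⟩, trivial⟩

theorem tySys_sys (M : Str U B) (θ : Fml U B) :
    Sys (tySys M θ).forest.toStr M θ.upreds θ.bpreds θ.Subf (fun _ p a => tpS M θ a = p.1.1)
      (fun c c0 => tpS M θ c = tpS M θ c0) where
  mono := fun h => h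
  un := by
    intro k p a h P hP
    constructor
    · rintro ⟨a', h', _, hu⟩; exact (tpS_un (h.trans h'.symm) hP).2 hu
    · intro hu; exact ⟨a, h, hP, hu⟩
  lp := by
    intro k p a h R hR
    refine Iff.trans (ESys.bb_self (X := tySys M θ)) ?_
    constructor
    · rintro ⟨a', h', _, hu⟩; exact (tpS_lp (h.trans h'.symm) hR).2 hu
    · intro hu; exact ⟨a, h, hR, hu⟩
  globA := by
    rintro k ⟨⟨t, a, rfl⟩, l⟩
    exact ⟨a, rfl⟩
  globC := fun k a => ⟨((⟨_, a, rfl⟩, []) : (tySys M θ).Node), rfl⟩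
  forth := by
    rintro k p c h q hne ⟨R, hR, hb⟩
    obtain ⟨κ, ⟨a, a', h1, h2, h3, rfl, h4⟩, hq⟩ := ESys.nbr (X := tySys M θ) hne hb
    refine ⟨a, a', h.trans h1.symm, h1, h3, fun R hR => ?_, h2⟩
    have := hq R
    simp only [Set.mem_ofPred_eq, hR, true_and] at this
    exact this
  back := by
    rintro k p c h c' hne ⟨R, hR, hb⟩
    obtain ⟨q, hqp, hq1, hq⟩ := ESys.child (X := tySys M θ) p (w := ⟨_, c', rfl⟩)
      (κ := ({R | R ∈ θ.bpreds ∧ M.b R c c'}, {R | R ∈ θ.bpreds ∧ M.b R c' c}))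
      ⟨c, c', h, rfl, hne, rfl, hb.imp (fun h => ⟨R, hR, h⟩) (fun h => ⟨R, hR, h⟩)⟩
    refine ⟨q, hqp, fun R hR => ?_, by rw [hq1]⟩
    have := hq R
    simp only [Set.mem_ofPred_eq, hR, true_and] at this
    exact this
  Erefl := fun _ => rfl
  Einv := fun χ hχ c c0 h => tpS_sat h hχ

theorem regular_model {M : Str U B} {θ : Fml U B} (hθ : IsGF2 θ) (hs : θ.IsSentence)
    (hM : SatS M θ) :
    ∃ F : Forest U B, SatS F.toStr θ ∧ F.Regular ∧ FiniteOutdeg F.toStr :=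
  ⟨(tySys M θ).forest, ((tySys_sys M θ).sentence hθ hs (fun _ h => h) (fun _ h => h)
    (fun _ h => h)).2 hM, ESys.regular, tySys_finiteOutdeg M θ⟩

/-- the direction from the bisimulation conditions to entailment -/
theorem entails_of_cond (φ₁ φ₂ : Fml U B) (SU : Set U) (SB : Set B)
    (h1 : IsGF2 φ₁) (h1s : φ₁.IsSentence)
    (H : ∀ F : Forest U B, SatS F.toStr φ₁ → F.Regular → FiniteOutdeg F.toStr →
      ∃ G : Forest U B, SatS G.toStr φ₂ ∧
        (∀ a, ∃ b, Bisim F.toStr G.toStr SU SB a b) ∧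
        (∀ b, ∀ k : ℕ, ∃ a, KBisim F.toStr G.toStr SU SB k a b)) :
    GF2Entails SU SB φ₁ φ₂ := by
  rintro ψ ⟨hψ, hψs, hU, hB⟩ hE A hA
  by_contra hc
  simp only [SatS, not_forall] at hc
  obtain ⟨σ, hσ⟩ := hc
  have hθ : SatS A (.conj φ₁ (.neg ψ)) := fun ρ =>
    ⟨hA ρ, fun h => hσ ((sat_sentence A hψs ρ σ).1 h)⟩
  obtain ⟨F, hF, hreg, hfin⟩ := regular_model (.conj h1 (.neg hψ))
    (by simp only [Fml.IsSentence, Fml.free] at *; simp [h1s, hψs]) hθ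
  obtain ⟨G, hG, hb1, hb2⟩ := H F (fun ρ => (hF ρ).1) hreg hfin
  have := (sentence_of_kbisim (fun k a => by
    obtain ⟨b, Z, hZ, hab⟩ := hb1 a
    exact ⟨b, hZ.kbisim hab⟩) (fun k b => hb2 b k) hψ hψs hU hB).2 (hE _ hG)
  obtain ⟨a⟩ := F.nonempty
  exact (hF (fun _ => a)).2 (this _)

/-! ### characteristic formulas -/

def oth : Var → Var
  | .x => .y
  | .y => .x

theorem oth_ne (v : Var) : oth v ≠ v := by cases v <;> simp [oth]

theorem oth_cases (v u : Var) : u = v ∨ u = oth v := by cases v <;> cases u <;> simp [oth]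

open Classical in
noncomputable def conjS : List (Fml U B) → List (Fml U B) → Fml U B
  | [], _ => .neg .fls
  | m :: M, s => .conj (if m ∈ s then m else .neg m) (conjS M s)

theorem sat_conjS (A : Str U B) (M s : List (Fml U B)) (σ : Var → A.Dom) :
    Sat A (conjS M s) σ ↔ ∀ m ∈ M, (m ∈ s ↔ Sat A m σ) := by
  induction M with
  | nil => simp [conjS, Sat]
  | cons m M ih =>
    simp only [conjS, Sat, ih, List.forall_mem_cons]
    refine and_congr ?_ Iff.rfl
    split
    · simp [*]
    · simp [*, Sat]

structure Good (SU : Set U) (SB : Set B) (V : Set Var) (χ : Fml U B) : Prop where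
  gf : IsGF2 χ
  fr : χ.free ⊆ V
  up : χ.upreds ⊆ SU
  bp : χ.bpreds ⊆ SB

theorem Good.mono {SU : Set U} {SB : Set B} {V W : Set Var} {χ : Fml U B}
    (h : Good SU SB V χ) (hV : V ⊆ W) : Good SU SB W χ := ⟨h.gf, h.fr.trans hV, h.up, h.bp⟩

theorem good_conjS {SU : Set U} {SB : Set B} {V : Set Var} {M s : List (Fml U B)}
    (h : ∀ m ∈ M, Good SU SB V m) : Good SU SB V (conjS M s) := by
  induction M with
  | nil =>
    exact ⟨.neg .fls, by simp [conjS, Fml.free], by simp [conjS, Fml.upreds],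
      by simp [conjS, Fml.bpreds]⟩
  | cons m M ih =>
    rw [List.forall_mem_cons] at h
    have h1 := h.1
    have h2 := ih h.2
    unfold conjS
    split
    · exact ⟨.conj h1.gf h2.gf, Set.union_subset h1.fr h2.fr, Set.union_subset h1.up h2.up,
        Set.union_subset h1.bp h2.bp⟩
    · exact ⟨.conj (.neg h1.gf) h2.gf, Set.union_subset h1.fr h2.fr, Set.union_subset h1.up h2.up,
        Set.union_subset h1.bp h2.bp⟩

def L0 (lU : List U) (lB : List B) (v : Var) : List (Fml U B) :=
  lU.map (fun P => .uatom P v) ++ lB.map (fun R => .batom R v v)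

def At2 (lB : List B) (v w : Var) : List (Fml U B) :=
  lB.map (fun R => .batom R v w) ++ lB.map (fun R => .batom R w v)

noncomputable def exF (α : Fml U B) (v : Var) (M s : List (Fml U B)) : Fml U B :=
  .ex (oth v) (.conj α (.conj (.neg (.eqv v (oth v))) (conjS M s)))

noncomputable def Lk (lU : List U) (lB : List B) : ℕ → Var → List (Fml U B)
  | 0, v => L0 lU lB v
  | k+1, v => L0 lU lB v ++ (At2 lB v (oth v)).flatMap fun α =>
      (At2 lB v (oth v) ++ Lk lU lB k (oth v)).sublists.map fun s =>
        exF α v (At2 lB v (oth v) ++ Lk lU lB k (oth v)) s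

theorem good_L0 {lU : List U} {lB : List B} {v : Var} :
    ∀ χ ∈ L0 lU lB v, Good {P | P ∈ lU} {R | R ∈ lB} {v} χ := by
  intro χ h
  simp only [L0, List.mem_append, List.mem_map] at h
  rcases h with ⟨P, hP, rfl⟩ | ⟨R, hR, rfl⟩
  · exact ⟨.uatom _ _, by simp [Fml.free], by simpa [Fml.upreds] using hP, by simp [Fml.bpreds]⟩
  · exact ⟨.batom _ _ _, by simp [Fml.free], by simp [Fml.upreds], by simpa [Fml.bpreds] using hR⟩

theorem good_At2 {lU : List U} {lB : List B} {v w : Var} :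
    ∀ χ ∈ (At2 lB v w : List (Fml U B)), Good {P | P ∈ lU} {R | R ∈ lB} Set.univ χ ∧
      χ.IsAtom ∧ v ∈ χ.free ∧ w ∈ χ.free := by
  intro χ h
  simp only [At2, List.mem_append, List.mem_map] at h
  rcases h with ⟨R, hR, rfl⟩ | ⟨R, hR, rfl⟩
  · exact ⟨⟨.batom _ _ _, by simp, by simp [Fml.upreds], by simpa [Fml.bpreds] using hR⟩,
      trivial, by simp [Fml.free], by simp [Fml.free]⟩
  · exact ⟨⟨.batom _ _ _, by simp, by simp [Fml.upreds], by simpa [Fml.bpreds] using hR⟩,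
      trivial, by simp [Fml.free], by simp [Fml.free]⟩

theorem good_Lk {lU : List U} {lB : List B} {k : ℕ} : ∀ {v : Var},
    ∀ χ ∈ Lk lU lB k v, Good {P | P ∈ lU} {R | R ∈ lB} {v} χ := by
  induction k with
  | zero => intro v; exact good_L0
  | succ k ih =>
    intro v χ h
    simp only [Lk, List.mem_append, List.mem_flatMap, List.mem_map] at h
    rcases h with h | ⟨α, hα, s, _, rfl⟩
    · exact good_L0 χ h
    · obtain ⟨gα, aα, h1, h2⟩ := good_At2 (lU := lU) α hα
      have hfr : α.free = Set.univ := by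
        ext u; rcases oth_cases v u with rfl | rfl <;> simp [*]
      have gM : Good {P | P ∈ lU} {R | R ∈ lB} Set.univ
          (conjS (At2 lB v (oth v) ++ Lk lU lB k (oth v)) s) := by
        apply good_conjS
        intro m hm
        rcases List.mem_append.1 hm with hm | hm
        · exact (good_At2 m hm).1
        · exact (ih m hm).mono (Set.subset_univ _)
      refine ⟨.exG aα (.conj (.neg (.eqv _ _)) gM.gf) (by rw [hfr]; exact Set.subset_univ _),
        ?_, ?_, ?_⟩
      · rintro u ⟨_, hu⟩
        rcases oth_cases v u with rfl | rfl
        · rfl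
        · exact (hu rfl).elim
      · simp only [exF, Fml.upreds, Set.empty_union]
        exact Set.union_subset gα.up gM.up
      · simp only [exF, Fml.bpreds, Set.empty_union]
        exact Set.union_subset gα.bp gM.bp

theorem L0_sub_Lk {lU : List U} {lB : List B} {k : ℕ} {v : Var} {χ : Fml U B}
    (h : χ ∈ L0 lU lB v) : χ ∈ Lk lU lB k v := by
  cases k with
  | zero => exact h
  | succ k => exact List.mem_append_left _ h

/-- agreement on the formulas `Lk` -/
def Agree (A C : Str U B) (lU : List U) (lB : List B) (k : ℕ) (v : Var) (a : A.Dom) (c : C.Dom) :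
    Prop :=
  ∀ χ ∈ Lk lU lB k v, (Sat A χ (fun _ => a) ↔ Sat C χ (fun _ => c))

theorem Agree.symm {A C : Str U B} {lU : List U} {lB : List B} {k : ℕ} {v : Var}
    {a : A.Dom} {c : C.Dom} (h : Agree A C lU lB k v a c) : Agree C A lU lB k v c a :=
  fun χ hχ => (h χ hχ).symm

theorem Agree.atp1 {A C : Str U B} {lU : List U} {lB : List B} {k : ℕ} {v : Var}
    {a : A.Dom} {c : C.Dom} (h : Agree A C lU lB k v a c) :
    atp1 A {P | P ∈ lU} {R | R ∈ lB} a = atp1 C {P | P ∈ lU} {R | R ∈ lB} c := by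
  rw [atp1_iff]
  constructor
  · intro P hP
    exact h (.uatom P v) (L0_sub_Lk (List.mem_append_left _ (List.mem_map.2 ⟨P, hP, rfl⟩)))
  · intro R hR
    exact h (.batom R v v) (L0_sub_Lk (List.mem_append_right _ (List.mem_map.2 ⟨R, hR, rfl⟩)))

open Classical in
theorem Agree.step {A C : Str U B} {lU : List U} {lB : List B} {k : ℕ} {v : Var}
    {a : A.Dom} {c : C.Dom} (h : Agree A C lU lB (k+1) v a c) (a' : A.Dom) (hne : a' ≠ a)
    (hg : Guarded2 A {R | R ∈ lB} a a') :
    ∃ c', c' ≠ c ∧ atp2 A {P | P ∈ lU} {R | R ∈ lB} a a' = atp2 C {P | P ∈ lU} {R | R ∈ lB} c c' ∧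
      Agree A C lU lB k (oth v) a' c' := by
  obtain ⟨α, hα, hs⟩ : ∃ α ∈ (At2 lB v (oth v) : List (Fml U B)),
      Sat A α (upd (fun _ => a) (oth v) a') := by
    obtain ⟨R, hR, hb | hb⟩ := hg
    · exact ⟨.batom R v (oth v), List.mem_append_left _ (List.mem_map.2 ⟨R, hR, rfl⟩),
        by simpa [Sat, upd, (oth_ne v).symm] using hb⟩
    · exact ⟨.batom R (oth v) v, List.mem_append_right _ (List.mem_map.2 ⟨R, hR, rfl⟩),
        by simpa [Sat, upd, (oth_ne v).symm] using hb⟩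
  set M := (At2 lB v (oth v) ++ Lk lU lB k (oth v) : List (Fml U B)) with hM
  set s := M.filter (fun m => decide (Sat A m (upd (fun _ => a) (oth v) a'))) with hsd
  have hmem : exF α v M s ∈ Lk lU lB (k+1) v := by
    refine List.mem_append_right _ (List.mem_flatMap.2 ⟨α, hα, List.mem_map.2 ⟨s, ?_, rfl⟩⟩)
    rw [List.mem_sublists]
    exact List.filter_sublist
  have hsA : Sat A (exF α v M s) (fun _ => a) := by
    refine ⟨a', hs, ?_, ?_⟩
    · simp [Sat, upd, (oth_ne v).symm, hne.symm]
    · rw [sat_conjS]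
      intro m hm
      simp [hsd, hm]
  obtain ⟨c', _, h2, h3⟩ := (h _ hmem).1 hsA
  rw [sat_conjS] at h3
  have key : ∀ m ∈ M, (Sat A m (upd (fun _ => a) (oth v) a') ↔
      Sat C m (upd (fun _ => c) (oth v) c')) := by
    intro m hm
    rw [← h3 m hm]
    simp [hsd, hm]
  have hAg : Agree A C lU lB k (oth v) a' c' := by
    intro χ hχ
    have h1 := key χ (List.mem_append_right _ hχ)
    rw [sat_congr A χ (fun _ => a') (upd (fun _ => a) (oth v) a') ?_,
      sat_congr C χ (fun _ => c') (upd (fun _ => c) (oth v) c') ?_]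
    · exact h1
    · intro u hu
      rw [(good_Lk χ hχ).fr hu]; simp [upd]
    · intro u hu
      rw [(good_Lk χ hχ).fr hu]; simp [upd]
  refine ⟨c', ?_, atp2_iff.2 ⟨h.atp1, hAg.atp1, fun R hR => ⟨?_, ?_⟩⟩, hAg⟩
  · simp [Sat, upd, (oth_ne v).symm] at h2
    exact fun e => h2 e.symm
  · have := key (.batom R v (oth v)) (List.mem_append_left _ (List.mem_append_left _
      (List.mem_map.2 ⟨R, hR, rfl⟩)))
    simpa [Sat, upd, (oth_ne v).symm] using this
  · have := key (.batom R (oth v) v) (List.mem_append_left _ (List.mem_append_right _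
      (List.mem_map.2 ⟨R, hR, rfl⟩)))
    simpa [Sat, upd, (oth_ne v).symm] using this

theorem Agree.kbisim {A C : Str U B} {lU : List U} {lB : List B} {k : ℕ} : ∀ {v : Var}
    {a : A.Dom} {c : C.Dom}, Agree A C lU lB k v a c →
      KBisim A C {P | P ∈ lU} {R | R ∈ lB} k a c := by
  induction k with
  | zero => intro v a c h; exact h.atp1
  | succ k ih =>
    intro v a c h
    refine ⟨h.atp1, fun a' h1 h2 => ?_, fun c' h1 h2 => ?_⟩
    · obtain ⟨c', p, q, r⟩ := h.step a' h1 h2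
      exact ⟨c', p, q, ih r⟩
    · obtain ⟨a', p, q, r⟩ := h.symm.step c' h1 h2
      exact ⟨a', p, q.symm, ih r.symm⟩

noncomputable def exS (lU : List U) (lB : List B) (k : ℕ) (s : List (Fml U B)) : Fml U B :=
  .ex .x (.conj (.eqv .x .x) (conjS (Lk lU lB k .x) s))

theorem good_exS {lU : List U} {lB : List B} {k : ℕ} {s : List (Fml U B)} :
    Good {P | P ∈ lU} {R | R ∈ lB} ∅ (exS lU lB k s) := by
  have g := good_conjS (s := s) (good_Lk (lU := lU) (lB := lB) (k := k) (v := .x))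
  refine ⟨.exG trivial g.gf ?_, ?_, ?_, ?_⟩
  · simpa [Fml.free] using g.fr
  · rintro u ⟨hu, hne⟩
    rcases hu with hu | hu
    · exact (hne (by simpa [Fml.free] using hu)).elim
    · exact (hne (g.fr hu)).elim
  · simpa [exS, Fml.upreds] using g.up
  · simpa [exS, Fml.bpreds] using g.bp

open Classical in
noncomputable def tyL (A : Str U B) (lU : List U) (lB : List B) (k : ℕ) (a : A.Dom) :
    List (Fml U B) := (Lk lU lB k .x).filter (fun m => decide (Sat A m (fun _ => a)))

theorem tyL_mem (A : Str U B) (lU : List U) (lB : List B) (k : ℕ) (a : A.Dom) :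
    tyL A lU lB k a ∈ (Lk lU lB k .x).sublists := by
  rw [List.mem_sublists]; exact List.filter_sublist

theorem mem_tyL {A : Str U B} {lU : List U} {lB : List B} {k : ℕ} {a : A.Dom} {χ : Fml U B}
    (h : χ ∈ Lk lU lB k .x) : χ ∈ tyL A lU lB k a ↔ Sat A χ (fun _ => a) := by
  simp [tyL, h]

theorem sat_exS {A : Str U B} {lU : List U} {lB : List B} {k : ℕ} {s : List (Fml U B)}
    {σ : Var → A.Dom} : Sat A (exS lU lB k s) σ ↔
      ∃ a, ∀ χ ∈ Lk lU lB k .x, (χ ∈ s ↔ Sat A χ (fun _ => a)) := by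
  simp only [exS, Sat, sat_conjS, true_and]
  refine exists_congr fun a => forall₂_congr fun χ hχ => iff_congr Iff.rfl ?_
  apply sat_congr
  intro u hu
  rw [(good_Lk χ hχ).fr hu]; simp [upd]

open Classical in
theorem exists_Gk {φ₁ φ₂ : Fml U B} {lU : List U} {lB : List B}
    (H : GF2Entails {P | P ∈ lU} {R | R ∈ lB} φ₁ φ₂) {F : Str U B} (hF : SatS F φ₁) (k : ℕ) :
    ∃ G : Str U B, SatS G φ₂ ∧
      (∀ a, ∃ c, KBisim F G {P | P ∈ lU} {R | R ∈ lB} k a c) ∧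
      (∀ c, ∃ a, KBisim F G {P | P ∈ lU} {R | R ∈ lB} k a c) := by
  by_contra hc
  push Not at hc
  obtain ⟨a0⟩ := F.nonempty
  set S : List (Fml U B) := (Lk lU lB k .x).sublists.map (exS lU lB k) with hS
  set t := S.filter (fun m => decide (Sat F m (fun _ => a0))) with ht
  have g : Good {P | P ∈ lU} {R | R ∈ lB} ∅ (conjS S t) := by
    apply good_conjS
    intro m hm
    obtain ⟨s, _, rfl⟩ := List.mem_map.1 hm
    exact good_exS
  have hent : Entails φ₂ (.neg (conjS S t)) := by
    intro G hG σ hσ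
    rw [sat_conjS] at hσ
    have key : ∀ s ∈ (Lk lU lB k .x).sublists,
        (Sat F (exS lU lB k s) (fun _ => a0) ↔ Sat G (exS lU lB k s) σ) := by
      intro s hs
      have hm : exS lU lB k s ∈ S := List.mem_map.2 ⟨s, hs, rfl⟩
      rw [← hσ _ hm]
      simp [ht, hm]
    obtain ⟨c, hcc⟩ := hc G hG (by
      intro a
      obtain ⟨c, hc⟩ := sat_exS.1 ((key _ (tyL_mem F lU lB k a)).1
        (sat_exS.2 ⟨a, fun χ hχ => mem_tyL hχ⟩))
      exact ⟨c, Agree.kbisim (v := .x) fun χ hχ => by rw [← hc χ hχ, mem_tyL hχ]⟩)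
    obtain ⟨a, ha⟩ := sat_exS.1 ((key _ (tyL_mem G lU lB k c)).2
        (sat_exS.2 ⟨c, fun χ hχ => mem_tyL hχ⟩))
    exact hcc a (Agree.kbisim (v := .x) fun χ hχ => by rw [← ha χ hχ, mem_tyL hχ])
  have := H (.neg (conjS S t)) ⟨.neg g.gf, Set.subset_empty_iff.1 g.fr, g.up, g.bp⟩ hent F hF
    (fun _ => a0)
  refine this ?_
  rw [sat_conjS]
  intro m hm
  simp [ht, hm]

/-! ### ultraproducts -/

section Ultra

open Filter

variable (G : ℕ → Str U B)

noncomputable abbrev uf : Ultrafilter ℕ := hyperfilter ℕ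

theorem uf_ge (k : ℕ) : ∀ᶠ i in (uf : Filter ℕ), k ≤ i := by
  have h : (uf : Filter ℕ) ≤ atTop := by
    rw [← Nat.cofinite_eq_atTop]; exact hyperfilter_le_cofinite
  exact h (eventually_ge_atTop k)

def upSetoid : Setoid (∀ i, (G i).Dom) where
  r p q := ∀ᶠ i in (uf : Filter ℕ), p i = q i
  iseqv := ⟨fun p => Eventually.of_forall fun _ => rfl, fun h => h.mono fun _ h => h.symm,
    fun h h' => by filter_upwards [h, h'] with i h h'; exact h.trans h'⟩

abbrev UD : Type := Quotient (upSetoid G)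

noncomputable def ultra : Str U B where
  Dom := UD G
  nonempty := ⟨Quotient.mk _ fun i => (G i).nonempty.some⟩
  u := fun P q => ∀ᶠ i in (uf : Filter ℕ), (G i).u P (q.out i)
  b := fun R p q => ∀ᶠ i in (uf : Filter ℕ), (G i).b R (p.out i) (q.out i)

variable {G}

theorem ud_mk (p : ∀ i, (G i).Dom) :
    ∀ᶠ i in (uf : Filter ℕ), (Quotient.mk (upSetoid G) p).out i = p i :=
  Quotient.mk_out (s := upSetoid G) p

theorem ud_eq (p q : UD G) : p = q ↔ ∀ᶠ i in (uf : Filter ℕ), p.out i = q.out i := by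
  rw [← Quotient.out_equiv_out]; rfl

theorem ud_ex (P : ∀ i, (G i).Dom → Prop) :
    (∃ d : UD G, ∀ᶠ i in (uf : Filter ℕ), P i (d.out i)) ↔
      ∀ᶠ i in (uf : Filter ℕ), ∃ d, P i d := by
  constructor
  · rintro ⟨d, h⟩; exact h.mono fun i h => ⟨_, h⟩
  · intro h
    have : ∀ i, ∃ d, (∃ d, P i d) → P i d := by
      intro i
      by_cases hd : ∃ d, P i d
      · obtain ⟨d, hd⟩ := hd; exact ⟨d, fun _ => hd⟩
      · exact ⟨(G i).nonempty.some, fun h => (hd h).elim⟩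
    choose p hp using this
    refine ⟨Quotient.mk _ p, ?_⟩
    filter_upwards [h, ud_mk p] with i h h'
    rw [h']; exact hp i h

theorem upd_out (σ : Var → UD G) (v : Var) (d : UD G) (i : ℕ) :
    (fun w => (upd σ v d w).out i) = upd (fun w => (σ w).out i) v (d.out i) := by
  funext w
  simp only [upd]
  split <;> rfl

theorem los (φ : Fml U B) : ∀ σ : Var → (ultra G).Dom,
    Sat (ultra G) φ σ ↔ ∀ᶠ i in (uf : Filter ℕ), Sat (G i) φ (fun v => (show UD G from σ v).out i) := by
  induction φ with
  | uatom P v => intro σ; exact Iff.rfl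
  | batom R v w => intro σ; exact Iff.rfl
  | eqv v w => intro σ; exact ud_eq _ _
  | fls =>
    intro σ
    simp only [Sat]
    constructor
    · exact fun h => h.elim
    · intro h; exact h.exists.elim fun _ h => h
  | neg φ ih => intro σ; simp only [Sat, ih]; rw [Ultrafilter.eventually_not]
  | conj φ ψ ih1 ih2 => intro σ; simp only [Sat, ih1, ih2]; rw [eventually_and]
  | disj φ ψ ih1 ih2 => intro σ; simp only [Sat, ih1, ih2]; rw [Ultrafilter.eventually_or]
  | impl φ ψ ih1 ih2 => intro σ; simp only [Sat, ih1, ih2]; rw [Ultrafilter.eventually_imp]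
  | all v φ ih =>
    intro σ
    rw [← not_iff_not, ← Ultrafilter.eventually_not]
    simp only [Sat, not_forall]
    rw [← ud_ex]
    refine exists_congr fun d => ?_
    rw [ih, ← Ultrafilter.eventually_not]
    refine Filter.eventually_congr (Filter.Eventually.of_forall fun i => ?_)
    exact iff_of_eq (congrArg (fun τ => ¬ Sat (G i) φ τ) (upd_out (G := G) σ v d i))
  | ex v φ ih =>
    intro σ
    simp only [Sat]
    rw [← ud_ex]
    refine exists_congr fun d => ?_
    rw [ih]
    refine Filter.eventually_congr (Filter.Eventually.of_forall fun i => ?_)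
    exact iff_of_eq (congrArg (fun τ => Sat (G i) φ τ) (upd_out (G := G) σ v d i))

theorem ultra_sat {φ : Fml U B} (h : ∀ i, SatS (G i) φ) : SatS (ultra G) φ :=
  fun σ => (los φ σ).2 (Eventually.of_forall fun i => h i _)

theorem const_iff {p : Prop} {P : ℕ → Prop} (h : ∀ᶠ i in (uf : Filter ℕ), (p ↔ P i)) :
    p ↔ ∀ᶠ i in (uf : Filter ℕ), P i := by
  constructor
  · intro hp; exact h.mono fun i h => h.1 hp
  · intro hP
    obtain ⟨i, h1, h2⟩ := (h.and hP).exists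
    exact h1.2 h2

variable {F : Str U B} {SU : Set U} {SB : Set B}

theorem ultra_atp1 {a : F.Dom} {q : UD G}
    (h : ∀ᶠ i in (uf : Filter ℕ), atp1 F SU SB a = atp1 (G i) SU SB (q.out i)) :
    atp1 F SU SB a = atp1 (ultra G) SU SB q := by
  refine atp1_iff.2 ⟨fun P hP => ?_, fun R hR => ?_⟩
  · exact const_iff (h.mono fun i h => (atp1_iff.1 h).1 P hP)
  · exact const_iff (h.mono fun i h => (atp1_iff.1 h).2 R hR)

theorem ultra_atp2 {a a' : F.Dom} {q q' : UD G}
    (h : ∀ᶠ i in (uf : Filter ℕ), atp2 F SU SB a a' = atp2 (G i) SU SB (q.out i) (q'.out i)) :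
    atp2 F SU SB a a' = atp2 (ultra G) SU SB q q' := by
  refine atp2_iff.2 ⟨ultra_atp1 (h.mono fun i h => (atp2_iff.1 h).1),
    ultra_atp1 (h.mono fun i h => (atp2_iff.1 h).2.1), fun R hR => ⟨?_, ?_⟩⟩
  · exact const_iff (h.mono fun i h => ((atp2_iff.1 h).2.2 R hR).1)
  · exact const_iff (h.mono fun i h => ((atp2_iff.1 h).2.2 R hR).2)

theorem ultra_ne {q q' : UD G} : q' ≠ q ↔ ∀ᶠ i in (uf : Filter ℕ), q'.out i ≠ q.out i := by
  rw [Ne, ud_eq, ← Ultrafilter.eventually_not]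

theorem ultra_back (hfin : FiniteOutdeg F) {k : ℕ} {a : F.Dom} {q : UD G}
    (h : ∀ᶠ i in (uf : Filter ℕ), KBisim F (G i) SU SB (k+1) a (q.out i)) (q' : UD G) (hne : q' ≠ q)
    (hg : Guarded2 (ultra G) SB q q') :
    ∃ a' ∈ {a' | a' ≠ a ∧ ∃ R : B, F.b R a a' ∨ F.b R a' a}, ∀ᶠ i in (uf : Filter ℕ),
      atp2 F SU SB a a' = atp2 (G i) SU SB (q.out i) (q'.out i) ∧
      KBisim F (G i) SU SB k a' (q'.out i) := by
  rw [← Ultrafilter.eventually_exists_mem_iff (hfin a)]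
  have hg' : ∀ᶠ i in (uf : Filter ℕ), Guarded2 (G i) SB (q.out i) (q'.out i) := by
    obtain ⟨R, hR, hb | hb⟩ := hg
    · exact hb.mono fun i h => ⟨R, hR, Or.inl h⟩
    · exact hb.mono fun i h => ⟨R, hR, Or.inr h⟩
  filter_upwards [h, ultra_ne.1 hne, hg'] with i h h1 h2
  obtain ⟨a', p1, p2, p3⟩ := h.2.2 _ h1 h2
  obtain ⟨R, _, hR⟩ := (guarded_congr p2).2 h2
  exact ⟨a', ⟨p1, R, hR⟩, p2, p3⟩

theorem ultra_kbisim (hfin : FiniteOutdeg F) {k : ℕ} : ∀ {a : F.Dom} {q : UD G},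
    (∀ᶠ i in (uf : Filter ℕ), KBisim F (G i) SU SB k a (q.out i)) →
      KBisim F (ultra G) SU SB k a q := by
  induction k with
  | zero => intro a q h; exact ultra_atp1 h
  | succ k ih =>
    intro a q h
    refine ⟨ultra_atp1 (h.mono fun i h => h.atp), fun a' h1 h2 => ?_, fun q' h1 h2 => ?_⟩
    · obtain ⟨q', hq'⟩ := (ud_ex _).2 (h.mono fun i h => h.2.1 a' h1 h2)
      exact ⟨q', ultra_ne.2 (hq'.mono fun i h => h.1), ultra_atp2 (hq'.mono fun i h => h.2.1),
        ih (hq'.mono fun i h => h.2.2)⟩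
    · obtain ⟨a', ha', h⟩ := ultra_back hfin h q' h1 h2
      exact ⟨a', ha'.1, ultra_atp2 (h.mono fun i h => h.1), ih (h.mono fun i h => h.2)⟩

theorem diag (P : ℕ → ∀ i, (G i).Dom → Prop) (hP : ∀ k i d, P (k+1) i d → P k i d)
    (h : ∀ k, ∀ᶠ i in (uf : Filter ℕ), ∃ d, P k i d) :
    ∃ q : UD G, ∀ k, ∀ᶠ i in (uf : Filter ℕ), P k i (q.out i) := by
  have anti : ∀ i d k l, k ≤ l → P l i d → P k i d := by
    intro i d k l hkl
    induction hkl with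
    | refl => exact id
    | step _ ih => exact fun h => ih (hP _ _ _ h)
  have : ∀ i n, ∃ d, ∀ k ≤ n, (∃ d, P k i d) → P k i d := by
    intro i n
    induction n with
    | zero =>
      by_cases hd : ∃ d, P 0 i d
      · obtain ⟨d, hd⟩ := hd
        exact ⟨d, fun k hk _ => anti i d _ _ hk hd⟩
      · refine ⟨(G i).nonempty.some, fun k hk h => ?_⟩
        obtain rfl : k = 0 := by omega
        exact (hd h).elim
    | succ n ih =>
      by_cases hd : ∃ d, P (n+1) i d
      · obtain ⟨d, hd⟩ := hd
        exact ⟨d, fun k hk _ => anti i d _ _ hk hd⟩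
      · obtain ⟨d, h⟩ := ih
        refine ⟨d, fun k hk h' => ?_⟩
        rcases Nat.lt_or_ge n k with hnk | hnk
        · obtain rfl : k = n + 1 := by omega
          exact (hd h').elim
        · exact h k hnk h'
  choose p hp using fun i => this i i
  refine ⟨Quotient.mk _ p, fun k => ?_⟩
  filter_upwards [h k, uf_ge k, ud_mk p] with i h1 h2 h3
  rw [h3]
  exact hp i k h2 h1

theorem ultra_bisim (hfin : FiniteOutdeg F) :
    IsBisim F (ultra G) SU SB (fun a (q : UD G) =>
      ∀ k, ∀ᶠ i in (uf : Filter ℕ), KBisim F (G i) SU SB k a (q.out i)) := by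
  constructor
  · intro a q h
    exact ultra_atp1 (h 0)
  · intro a q h a' h1 h2
    obtain ⟨q', hq'⟩ := diag (fun k i d => d ≠ Quotient.out (s := upSetoid G) q i ∧
        atp2 F SU SB a a' = atp2 (G i) SU SB (Quotient.out (s := upSetoid G) q i) d ∧
        KBisim F (G i) SU SB k a' d) (fun k i d h => ⟨h.1, h.2.1, h.2.2.pred⟩)
      (fun k => (h (k+1)).mono fun i h => h.2.1 a' h1 h2)
    exact ⟨q', ultra_ne.2 ((hq' 0).mono fun i h => h.1), ultra_atp2 ((hq' 0).mono fun i h => h.2.1),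
      fun k => (hq' k).mono fun i h => h.2.2⟩
  · intro a q h q' h1 h2
    have := fun k => ultra_back hfin (h (k+1)) q' h1 h2
    obtain ⟨a', ha', hk⟩ := (Ultrafilter.eventually_exists_mem_iff (f := uf) (hfin a)).1
      (Eventually.of_forall this)
    refine ⟨a', ha'.1, ?_, fun k => ?_⟩
    · obtain ⟨k, hk⟩ := hk.exists
      exact ultra_atp2 (hk.mono fun i h => h.1)
    · obtain ⟨l, hl, hkl⟩ := (hk.and (uf_ge k)).exists
      exact hl.mono fun i h => h.2.le hkl

end Ultra

theorem cond_of_entails {φ₁ φ₂ : Fml U B} {lU : List U} {lB : List B}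
    (h2 : IsGF2 φ₂) (h2s : φ₂.IsSentence)
    (H : GF2Entails {P | P ∈ lU} {R | R ∈ lB} φ₁ φ₂) {F : Str U B} (hF : SatS F φ₁)
    (hfin : FiniteOutdeg F) :
    ∃ G : Forest U B, SatS G.toStr φ₂ ∧
        (∀ a, ∃ b, Bisim F G.toStr {P | P ∈ lU} {R | R ∈ lB} a b) ∧
        (∀ b, ∀ k : ℕ, ∃ a, KBisim F G.toStr {P | P ∈ lU} {R | R ∈ lB} k a b) := by
  choose G hG hG1 hG2 using fun k => exists_Gk H hF k
  refine ⟨(unravSys (ultra G)).forest, (unrav_sat _ h2 h2s).1 (ultra_sat hG), ?_, ?_⟩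
  · intro a
    obtain ⟨q, hq⟩ := diag (G := G)
      (fun k i d => KBisim F (G i) {P | P ∈ lU} {R | R ∈ lB} k a d)
      (fun k i d h => h.pred) (fun k => by
        filter_upwards [uf_ge k] with i hi
        obtain ⟨c, hc⟩ := hG1 i a
        exact ⟨c, hc.le hi⟩)
    exact ⟨((q, []) : (unravSys (ultra G)).Node), Bisim.trans (c := q)
      ⟨_, ultra_bisim hfin, hq⟩ ⟨_, unrav_bisim _ _ _, rfl⟩⟩
  · intro p k
    let q : UD G := p.1
    choose a ha using fun i => hG2 i (q.out i)
    obtain ⟨s, _, hs⟩ := (Ultrafilter.eventually_exists_mem_iff (f := uf)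
      (is := {s | s ∈ (Lk lU lB k .x).sublists}) (P := fun s i => tyL F lU lB k (a i) = s)
      (List.finite_toSet _)).1 (Filter.Eventually.of_forall fun i => ⟨_, tyL_mem _ _ _ _ _, rfl⟩)
    obtain ⟨i0, h0⟩ := hs.exists
    refine ⟨a i0, KBisim.trans (c := q) (ultra_kbisim hfin ?_) ((unrav_bisim _ _ _).kbisim rfl)⟩
    filter_upwards [hs, uf_ge k] with i hi hk
    refine KBisim.trans (c := a i) (Agree.kbisim (v := .x) fun χ hχ => ?_) ((ha i).le hk)
    rw [← mem_tyL hχ, ← mem_tyL hχ, h0, hi]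

end Helpers

/-- forest-model variant of the bounded-bisimulation
characterization: `φ₁ ⊨_Σ φ₂` iff for every regular forest model `𝔄` of `φ₁`
of finite outdegree there is a forest model `𝔅` of `φ₂` satisfying the two
bisimulation conditions. -/
theorem gf2_entails_iff_forest_bisimulation_conditions
    {U B : Type} (φ₁ φ₂ : Fml U B) (SU : Set U) (SB : Set B)
    (hSU : SU.Finite) (hSB : SB.Finite)
    (h1 : IsGF2 φ₁) (h1s : φ₁.IsSentence)
    (h2 : IsGF2 φ₂) (h2s : φ₂.IsSentence) :
    GF2Entails SU SB φ₁ φ₂ ↔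
    (∀ F : Forest U B, SatS F.toStr φ₁ → F.Regular → FiniteOutdeg F.toStr →
      ∃ G : Forest U B, SatS G.toStr φ₂ ∧
        (∀ a, ∃ b, Bisim F.toStr G.toStr SU SB a b) ∧
        (∀ b, ∀ k : ℕ, ∃ a, KBisim F.toStr G.toStr SU SB k a b)) := by
  constructor
  · intro H F hF _ hfin
    obtain ⟨lU, hlU⟩ : ∃ l : List U, {P | P ∈ l} = SU := ⟨hSU.toFinset.toList, by ext; simp⟩
    obtain ⟨lB, hlB⟩ : ∃ l : List B, {R | R ∈ l} = SB := ⟨hSB.toFinset.toList, by ext; simp⟩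
    subst hlU hlB
    exact cond_of_entails h2 h2s H hF hfin
  · exact entails_of_cond φ₁ φ₂ SU SB h1 h1s

end GFC
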